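/- (Multiplicativity of intrinsic elements) Let 𝒜 be a hyperplane arrangement in ℝ^n and for t ∈ ℝ let ν_t be its intrinsic element. Then for all s, t ∈ ℝ one has ν_s · ν_t = ν_{st} in the Tits algebra ℝΣ[𝒜]. Moreover, ν_1 equals the unit element υ = Σ_{F essentially bounded} (−1)^{rk(F)} H_F of ℝΣ[𝒜], and ν_{−1} equals the Takeuchi element τ = Σ_F (−1)^{rk(F)} H_F (sum over all faces). -/

import Mathlib

open Finset MeasureTheory

noncomputable section

namespace CharElts

/-- Ambient Euclidean space `ℝ^n`. -/
abbrev V (n : ℕ) := EuclideanSpace ℝ (Fin n)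

/-- An affine functional on `ℝ^n`; a hyperplane is its zero set. -/
abbrev AffForm (n : ℕ) := V n →ᵃ[ℝ] ℝ

/-- The hyperplane determined by an affine functional. -/
def hypSet {n : ℕ} (ℓ : AffForm n) : Set (V n) := {x | ℓ x = 0}

variable {n : ℕ} (𝒜 : Finset (AffForm n))

/-- Index type for the hyperplanes of the arrangement. -/
abbrev Idx := {ℓ : AffForm n // ℓ ∈ 𝒜}

/-- The (possibly empty) set cut out by a sign vector `σ`. -/
def faceSet (σ : Idx 𝒜 → SignType) : Set (V n) :=
  {x | ∀ ℓ : Idx 𝒜, SignType.sign (ℓ.1 x) = σ ℓ}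

/-- A face of the arrangement: a sign vector whose face set is nonempty. -/
@[ext] structure Face where
  sgn : Idx 𝒜 → SignType
  nonempty : (faceSet 𝒜 sgn).Nonempty

open Classical in
instance : Fintype (Face 𝒜) :=
  Fintype.ofInjective Face.sgn (fun F G h => by cases F; cases G; simpa using h)

/-- The underlying point set of a face. -/
def Face.carrier (F : Face 𝒜) : Set (V n) := faceSet 𝒜 F.sgn

/-- A flat: a nonempty intersection of some subcollection of the hyperplanes
(the empty intersection gives all of `ℝ^n`). -/
def IsFlat (X : Set (V n)) : Prop :=
  X.Nonempty ∧ ∃ P : Idx 𝒜 → Prop, X = ⋂ ℓ ∈ {ℓ : Idx 𝒜 | P ℓ}, hypSet ℓ.1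

/-- The poset of flats, ordered by inclusion. -/
def Flat := {X : Set (V n) // IsFlat 𝒜 X}

instance : PartialOrder (Flat 𝒜) :=
  inferInstanceAs (PartialOrder {X : Set (V n) // IsFlat 𝒜 X})

lemma flat_eq_inter (X : Flat 𝒜) :
    X.1 = ⋂ ℓ ∈ {ℓ : Idx 𝒜 | X.1 ⊆ hypSet ℓ.1}, hypSet ℓ.1 := by
  obtain ⟨Z, hne, P, rfl⟩ := X
  apply subset_antisymm
  · intro x hx
    simp only [Set.mem_iInter, Set.mem_setOf_eq]
    intro ℓ hℓ
    exact hℓ hx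
  · intro x hx
    simp only [Set.mem_iInter, Set.mem_setOf_eq] at hx ⊢
    intro ℓ hℓ
    refine hx ℓ ?_
    intro y hy
    simp only [Set.mem_iInter, Set.mem_setOf_eq] at hy
    exact hy ℓ hℓ

open Classical in
instance : Fintype (Flat 𝒜) :=
  Fintype.ofInjective (fun X : Flat 𝒜 => {ℓ : Idx 𝒜 | X.1 ⊆ hypSet ℓ.1}) <| by
    intro X Y h
    dsimp only at h
    apply Subtype.ext
    rw [flat_eq_inter 𝒜 X, flat_eq_inter 𝒜 Y, h]

/-- The top flat: the whole ambient space. -/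
def topFlat : Flat 𝒜 :=
  ⟨Set.univ, ⟨⟨0, trivial⟩, fun _ => False, by simp⟩⟩

/-- The support of a face: the intersection of the hyperplanes on which it lies. -/
def supp (F : Face 𝒜) : Flat 𝒜 :=
  ⟨⋂ ℓ ∈ {ℓ : Idx 𝒜 | F.sgn ℓ = 0}, hypSet ℓ.1, by
    constructor
    · obtain ⟨x, hx⟩ := F.nonempty
      refine ⟨x, ?_⟩
      simp only [Set.mem_iInter, Set.mem_setOf_eq]
      intro ℓ hℓ
      have h0 := hx ℓ
      rw [hℓ] at h0
      simpa [hypSet, sign_eq_zero_iff] using h0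
    · exact ⟨fun ℓ => F.sgn ℓ = 0, rfl⟩⟩

/-- The dimension of (the affine hull of) a subset of `ℝ^n`. -/
def dimS (X : Set (V n)) : ℕ := Module.finrank ℝ (vectorSpan ℝ X)

open Classical in
/-- An element `w = Σ_F w^F H_F` of the Tits algebra (recorded by its coefficient
vector) is *characteristic of parameter `t`* if for every flat `X`, the sum of the
coefficients of the faces with support contained in `X` equals `t ^ rk X`,
where `rk X = dim X - d` and `d` is the common dimension of the minimal flats. -/
def IsCharacteristic (d : ℕ) (w : Face 𝒜 → ℝ) (t : ℝ) : Prop :=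
  ∀ X : Flat 𝒜,
    (∑ F : Face 𝒜, if (supp 𝒜 F).1 ⊆ X.1 then w F else 0) = t ^ (dimS X.1 - d)

/-- The sign vector of the Tits product `FG` of two faces. -/
def combineSgn {I : Type*} (σ τ : I → SignType) : I → SignType :=
  fun ℓ => if σ ℓ = 0 then τ ℓ else σ ℓ

open Classical in
/-- The product of the Tits algebra, on coefficient vectors:
`(u·v)^C = Σ_{F,G : FG = C} u^F v^G`, extending `H_F · H_G = H_{FG}` bilinearly. -/
def mulT (u v : Face 𝒜 → ℝ) : Face 𝒜 → ℝ :=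
  fun C => ∑ F : Face 𝒜, ∑ G : Face 𝒜,
    if combineSgn F.sgn G.sgn = C.sgn then u F * v G else 0

open Classical in
/-- The basis element `H_F` of the Tits algebra, as a coefficient vector. -/
def unitV (F : Face 𝒜) : Face 𝒜 → ℝ := fun G => if G = F then 1 else 0

/-- A chamber: a face whose sign vector is nowhere zero. -/
def IsChamber (F : Face 𝒜) : Prop := ∀ ℓ : Idx 𝒜, F.sgn ℓ ≠ 0

open Classical in
/-- `IsMoebius 𝒜 μ` states that `μ` is the Möbius function of the poset of
flats of `𝒜` (these conditions determine `μ` uniquely). -/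
def IsMoebius (μ : Flat 𝒜 → Flat 𝒜 → ℝ) : Prop :=
  (∀ X, μ X X = 1) ∧
  (∀ X Y : Flat 𝒜, X < Y →
    (∑ Z : Flat 𝒜, if X ≤ Z ∧ Z ≤ Y then μ X Z else 0) = 0) ∧
  (∀ X Y : Flat 𝒜, ¬ X ≤ Y → μ X Y = 0)

open Classical in
/-- `χ(𝒜^X, t) = Σ_{Y ≤ X} μ(Y, X) t^{rk Y}`: the characteristic polynomial of the
arrangement under the flat `X`.  Taking `X = ⊤` gives the characteristic
polynomial of `𝒜` itself. -/
def charPolyUnder (μ : Flat 𝒜 → Flat 𝒜 → ℝ) (d : ℕ) (X : Flat 𝒜) (t : ℝ) : ℝ :=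
  ∑ Y : Flat 𝒜, if Y ≤ X then μ Y X * t ^ (dimS Y.1 - d) else 0

/-- The space of directions `L = ⋂_{H ∈ 𝒜} dir(H)`: the intersection of the kernels of
the linear parts of the defining functionals. -/
def dirL : Submodule ℝ (V n) := ⨅ ℓ : Idx 𝒜, LinearMap.ker ℓ.1.linear

/-- A face is essentially bounded if its image in `ℝ^n / L` is bounded. -/
def EssBounded (F : Face 𝒜) : Prop :=
  Bornology.IsBounded ((dirL 𝒜).mkQ '' F.carrier)

/-- A hyperplane (zero set of a nonconstant affine functional) is nonempty. -/
lemma hyp_nonempty (ℓ : AffForm n) (h : ℓ.linear ≠ 0) : (hypSet ℓ).Nonempty := by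
  obtain ⟨v, hv⟩ : ∃ v, ℓ.linear v ≠ 0 := by
    by_contra hc
    push_neg at hc
    exact h (LinearMap.ext fun v => hc v)
  refine ⟨((-ℓ 0) / (ℓ.linear v)) • v, ?_⟩
  have hdecomp : ℓ (((-ℓ 0) / (ℓ.linear v)) • v)
      = ℓ.linear (((-ℓ 0) / (ℓ.linear v)) • v) + ℓ 0 := by
    conv_lhs => rw [show ((-ℓ 0) / (ℓ.linear v)) • v = ((-ℓ 0) / (ℓ.linear v)) • v +ᵥ (0 : V n)
      from (add_zero _).symm]
    rw [AffineMap.map_vadd]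
    rfl
  show ℓ _ = 0
  rw [hdecomp, LinearMap.map_smul, smul_eq_mul, div_mul_cancel₀ _ hv, neg_add_cancel]

/-- The set of nearest points of `P` to `x`. -/
def nearestPts {n : ℕ} (P : Set (V n)) (x : V n) : Set (V n) :=
  {y ∈ P | ∀ z ∈ P, dist x y ≤ dist x z}

/-- Faces of a polyhedron `P`: `P` itself, or a nonempty subset of the form
`{x ∈ P | ℓ x = sup_P ℓ}` for a linear functional `ℓ` bounded above on `P`. -/
def IsPolyFace {n : ℕ} (P Q : Set (V n)) : Prop :=
  Q = P ∨ (Q.Nonempty ∧ ∃ ℓ : V n →ₗ[ℝ] ℝ, BddAbove (ℓ '' P) ∧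
    Q = {x ∈ P | ℓ x = sSup (ℓ '' P)})

/-- `S_k(P)`: the set of points of `ℝ^n` whose nearest point in `P` lies in the
relative interior of some `k`-dimensional face of `P`. -/
def projSet {n : ℕ} (P : Set (V n)) (k : ℕ) : Set (V n) :=
  {x | ∃ y ∈ nearestPts P x, ∃ Q : Set (V n),
    IsPolyFace P Q ∧ dimS Q = k ∧ y ∈ intrinsicInterior ℝ Q}

/-- `HasIntrinsicVolumes P v` says that for each `k`, the proportion of the volume of
space occupied by `S_k(P)` exists and equals `v k`, i.e.
`v_k(P) = lim_{R→∞} vol(S_k(P) ∩ B(0,R)) / vol(B(0,R))`. -/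
def HasIntrinsicVolumes {n : ℕ} (P : Set (V n)) (v : ℕ → ℝ) : Prop :=
  ∀ k : ℕ, Filter.Tendsto
    (fun R : ℝ =>
      (volume (projSet P k ∩ Metric.ball (0 : V n) R)).toReal /
        (volume (Metric.ball (0 : V n) R)).toReal)
    Filter.atTop (nhds (v k))

/-- The coefficient vector of the intrinsic element `ν_t` of parameter `t`,
with `d = dim L`. -/
def intrinsicElt {n : ℕ} (𝒜 : Finset (AffForm n)) (v : Face 𝒜 → ℕ → ℝ) (t : ℝ) :
    Face 𝒜 → ℝ :=
  fun F => (-1 : ℝ) ^ (dimS (Face.carrier 𝒜 F)) *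
    ∑ k ∈ Finset.Icc (Module.finrank ℝ (dirL 𝒜)) (dimS (Face.carrier 𝒜 F)),
      (-1 : ℝ) ^ k * v F k * t ^ (k - Module.finrank ℝ (dirL 𝒜))


end CharElts

namespace CharElts

section Basics

variable {n : ℕ} {𝒜 : Finset (AffForm n)}

open Filter Topology

/-- Sign vector of a point. -/
def sg (𝒜 : Finset (AffForm n)) (x : V n) : Idx 𝒜 → SignType := fun ℓ => SignType.sign (ℓ.1 x)

/-- Intersection of the kernels of the linear parts of the forms satisfying `P`. -/
def dirOn (𝒜 : Finset (AffForm n)) (P : Idx 𝒜 → Prop) : Submodule ℝ (V n) :=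
  ⨅ ℓ : Idx 𝒜, ⨅ (_ : P ℓ), LinearMap.ker ℓ.1.linear

lemma mem_dirOn {P : Idx 𝒜 → Prop} {x : V n} :
    x ∈ dirOn 𝒜 P ↔ ∀ ℓ : Idx 𝒜, P ℓ → ℓ.1.linear x = 0 := by
  simp [dirOn, Submodule.mem_iInf]

/-- Direction space of a sign vector. -/
def dir (σ : Idx 𝒜 → SignType) : Submodule ℝ (V n) := dirOn 𝒜 (fun ℓ => σ ℓ = 0)

lemma mem_dir {σ : Idx 𝒜 → SignType} {x : V n} :
    x ∈ dir σ ↔ ∀ ℓ : Idx 𝒜, σ ℓ = 0 → ℓ.1.linear x = 0 := mem_dirOn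

lemma aff_add (ℓ : AffForm n) (x v : V n) : ℓ (x + v) = ℓ x + ℓ.linear v := by
  have := ℓ.map_vadd x v
  simp only [vadd_eq_add] at this
  rw [add_comm x v, this, add_comm]

lemma aff_add_smul (ℓ : AffForm n) (x v : V n) (c : ℝ) :
    ℓ (x + c • v) = ℓ x + c * ℓ.linear v := by
  rw [aff_add]; simp

lemma aff_sub (ℓ : AffForm n) (x y : V n) : ℓ.linear (x - y) = ℓ x - ℓ y := by
  have := aff_add ℓ y (x - y)
  rw [add_sub_cancel] at this
  linarith

lemma aff_cont (ℓ : AffForm n) : Continuous (fun x : V n => ℓ x) :=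
  ℓ.continuous_of_finiteDimensional

lemma lin_cont (ℓ : AffForm n) : Continuous (fun x : V n => ℓ.linear x) :=
  ℓ.linear.continuous_of_finiteDimensional

/-- Germ lemma: moving a little bit in direction `v`. -/
lemma germ (𝒜 : Finset (AffForm n)) (x v : V n) : ∀ᶠ ε : ℝ in 𝓝[>] 0, ∀ ℓ : Idx 𝒜,
    (sg 𝒜 x ℓ ≠ 0 → sg 𝒜 (x + ε • v) ℓ = sg 𝒜 x ℓ) ∧
    (sg 𝒜 x ℓ = 0 → sg 𝒜 (x + ε • v) ℓ = SignType.sign (ℓ.1.linear v)) := by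
  rw [eventually_all]
  intro ℓ
  simp only [sg, aff_add_smul]
  have hc : Tendsto (fun ε : ℝ => ℓ.1 x + ε * ℓ.1.linear v) (𝓝[>] 0) (𝓝 (ℓ.1 x)) := by
    have : Continuous (fun ε : ℝ => ℓ.1 x + ε * ℓ.1.linear v) := by fun_prop
    have h := this.tendsto 0
    simp only [zero_mul, add_zero] at h
    exact h.mono_left nhdsWithin_le_nhds
  rcases lt_trichotomy (ℓ.1 x) 0 with h | h | h
  · filter_upwards [hc.eventually (gt_mem_nhds h)] with ε hε
    rw [sign_neg hε, sign_neg h]; simp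
  · filter_upwards [self_mem_nhdsWithin] with ε hε
    simp only [h, zero_add, sign_zero, ne_eq, not_true_eq_false, false_imp_iff, true_and,
      forall_const]
    rw [sign_mul, sign_pos hε, one_mul]
  · filter_upwards [hc.eventually (lt_mem_nhds h)] with ε hε
    rw [sign_pos hε, sign_pos h]; simp

/-- Moving a lot in direction `v`. -/
lemma germ_top (𝒜 : Finset (AffForm n)) (x v : V n) : ∀ᶠ r : ℝ in atTop, ∀ ℓ : Idx 𝒜,
    (ℓ.1.linear v = 0 → sg 𝒜 (x + r • v) ℓ = sg 𝒜 x ℓ) ∧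
    (ℓ.1.linear v ≠ 0 → sg 𝒜 (x + r • v) ℓ = SignType.sign (ℓ.1.linear v)) := by
  rw [eventually_all]
  intro ℓ
  simp only [sg, aff_add_smul]
  rcases lt_trichotomy (ℓ.1.linear v) 0 with h | h | h
  · filter_upwards [eventually_gt_atTop ((- ℓ.1 x) / ℓ.1.linear v)] with r hr
    refine ⟨fun h' => absurd h' h.ne, fun _ => ?_⟩
    rw [sign_neg h, sign_neg]
    rw [div_lt_iff_of_neg h] at hr
    linarith
  · simp [h]
  · filter_upwards [eventually_gt_atTop ((- ℓ.1 x) / ℓ.1.linear v)] with r hr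
    refine ⟨fun h' => absurd h' h.ne', fun _ => ?_⟩
    rw [sign_pos h, sign_pos]
    rw [div_lt_iff₀ h] at hr
    linarith

/-- Extract an actual positive number from the germ lemma together with an open condition. -/
lemma germ_open (x v : V n) {U : Set (V n)} (hU : IsOpen U) (hx : x ∈ U) :
    ∀ᶠ ε : ℝ in 𝓝[>] 0, x + ε • v ∈ U := by
  have : Continuous (fun ε : ℝ => x + ε • v) := by fun_prop
  have h := this.tendsto 0
  simp only [zero_smul, add_zero] at h
  exact (h.mono_left nhdsWithin_le_nhds).eventually (hU.mem_nhds hx)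

lemma convex_part {P : Idx 𝒜 → Prop} {τ : Idx 𝒜 → SignType} {x y : V n}
    (hx : ∀ ℓ, P ℓ → sg 𝒜 x ℓ = τ ℓ) (hy : ∀ ℓ, P ℓ → sg 𝒜 y ℓ = τ ℓ) {a b : ℝ}
    (ha : 0 ≤ a) (hb : 0 ≤ b) (hab : a + b = 1) :
    ∀ ℓ, P ℓ → sg 𝒜 (a • x + b • y) ℓ = τ ℓ := by
  intro ℓ hℓ
  have h1 := hx ℓ hℓ
  have h2 := hy ℓ hℓ
  simp only [sg] at *
  have e : ℓ.1 (a • x + b • y) = a * ℓ.1 x + b * ℓ.1 y := by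
    have := Convex.combo_affine_apply (f := ℓ.1) (x := x) (y := y) hab
    simpa using this
  rw [e]
  rcases eq_or_lt_of_le ha with h | h
  · have : b = 1 := by linarith
    rw [← h, this]; simpa using h2
  rcases lt_trichotomy (ℓ.1 x) 0 with hl | hl | hl
  · rw [sign_neg hl] at h1
    rw [← h1] at h2 ⊢
    rw [sign_eq_neg_one_iff] at h2 ⊢
    nlinarith [mul_nonneg hb (neg_nonneg.2 h2.le), mul_pos h (neg_pos.2 hl)]
  · rw [hl, sign_zero] at h1
    rw [← h1] at h2 ⊢
    rw [sign_eq_zero_iff] at h2 ⊢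
    rw [hl, h2]; ring
  · rw [sign_pos hl] at h1
    rw [← h1] at h2 ⊢
    rw [sign_eq_one_iff] at h2 ⊢
    nlinarith [mul_nonneg hb h2.le, mul_pos h hl]

end Basics

section EulerSection

variable {n : ℕ} {𝒜 : Finset (AffForm n)}

open Filter Topology

/-- dimension of a sign vector -/
def dm (σ : Idx 𝒜 → SignType) : ℕ := Module.finrank ℝ (dir σ)

lemma Face.sg_eq {F : Face 𝒜} {x : V n} : x ∈ F.carrier ↔ sg 𝒜 x = F.sgn := by
  simp only [Face.carrier, faceSet, sg]
  exact ⟨fun h => funext h, fun h ℓ => congrFun h ℓ⟩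

/-- the face containing a point -/
def faceOf (𝒜 : Finset (AffForm n)) (x : V n) : Face 𝒜 := ⟨sg 𝒜 x, ⟨x, fun _ => rfl⟩⟩

/-- a chosen point of a face -/
def Face.pt (F : Face 𝒜) : V n := F.nonempty.some

lemma Face.sg_pt (F : Face 𝒜) : sg 𝒜 F.pt = F.sgn := funext F.nonempty.some_mem

lemma Face.pt_mem (F : Face 𝒜) : F.pt ∈ F.carrier := F.nonempty.some_mem

lemma finrank_inf_ker (W : Submodule ℝ (V n)) (f : V n →ₗ[ℝ] ℝ) {w : V n} (hw : w ∈ W)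
    (hf : f w ≠ 0) :
    Module.finrank ℝ W = Module.finrank ℝ (W ⊓ LinearMap.ker f : Submodule ℝ (V n)) + 1 := by
  have h1 := (f.domRestrict W).finrank_range_add_finrank_ker
  have h2 : LinearMap.range (f.domRestrict W) = ⊤ := by
    rw [LinearMap.range_eq_top]
    apply LinearMap.surjective
    intro h
    apply hf
    have := LinearMap.congr_fun h ⟨w, hw⟩
    simpa using this
  have h3 : Module.finrank ℝ (LinearMap.ker (f.domRestrict W)) =
      Module.finrank ℝ (W ⊓ LinearMap.ker f : Submodule ℝ (V n)) := by
    have : (LinearMap.ker (f.domRestrict W)).map W.subtype = W ⊓ LinearMap.ker f := by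
      rw [LinearMap.ker_domRestrict, Submodule.map_comap_subtype]
    rw [← this, Submodule.finrank_map_subtype_eq]
  rw [h2, finrank_top, Module.finrank_self, h3] at h1
  omega

open Classical in
/-- Euler characteristic of a relatively open set cut by an open convex set. -/
lemma euler (U : Set (V n)) (hU : IsOpen U) (hUc : Convex ℝ U) (I : Finset (Idx 𝒜)) :
    ∀ τ : Idx 𝒜 → SignType,
    (∑ F : Face 𝒜, if (∀ ℓ ∉ I, F.sgn ℓ = τ ℓ) ∧ (∃ x ∈ U, sg 𝒜 x = F.sgn)
      then (-1 : ℝ) ^ dm F.sgn else 0) =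
    if ∃ x ∈ U, ∀ ℓ ∉ I, sg 𝒜 x ℓ = τ ℓ
      then (-1 : ℝ) ^ Module.finrank ℝ (dirOn 𝒜 (fun ℓ => ℓ ∉ I ∧ τ ℓ = 0)) else 0 := by
  induction I using Finset.induction_on with
  | empty =>
    intro τ
    split_ifs with h
    · obtain ⟨x, hxU, hx⟩ := h
      have hx' : sg 𝒜 x = τ := funext fun ℓ => hx ℓ (by simp)
      rw [Finset.sum_eq_single (faceOf 𝒜 x)]
      · rw [if_pos]
        · have e : (fun ℓ : Idx 𝒜 => ℓ ∉ (∅ : Finset (Idx 𝒜)) ∧ τ ℓ = 0) = fun ℓ => τ ℓ = 0 := by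
            funext ℓ; simp
          rw [e]
          change (-1 : ℝ) ^ Module.finrank ℝ (dir (sg 𝒜 x)) = _
          rw [hx']; rfl
        · exact ⟨hx, x, hxU, rfl⟩
      · intro F _ hF
        rw [if_neg]
        rintro ⟨h1, -⟩
        apply hF
        ext1
        simp only [faceOf, hx']
        exact funext fun ℓ => h1 ℓ (by simp)
      · simp
    · apply Finset.sum_eq_zero
      intro F _
      rw [if_neg]
      rintro ⟨h1, x, hxU, hx⟩
      exact h ⟨x, hxU, fun ℓ hℓ => by rw [hx, h1 ℓ hℓ]⟩
  | insert i I hi IH =>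
    intro τ
    set W : Set (V n) := {x | x ∈ U ∧ ∀ ℓ ∉ insert i I, sg 𝒜 x ℓ = τ ℓ} with hW
    set B : Submodule ℝ (V n) := dirOn 𝒜 (fun ℓ => ℓ ∉ insert i I ∧ τ ℓ = 0) with hB
    have upd : ∀ (s : SignType) (ρ : Idx 𝒜 → SignType),
        (∀ ℓ ∉ I, ρ ℓ = Function.update τ i s ℓ) ↔ (∀ ℓ ∉ insert i I, ρ ℓ = τ ℓ) ∧ ρ i = s := by
      intro s ρ
      constructor
      · intro h
        refine ⟨fun ℓ hℓ => ?_, by simpa using h i hi⟩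
        rw [Finset.mem_insert, not_or] at hℓ
        simpa [Function.update_of_ne hℓ.1] using h ℓ hℓ.2
      · rintro ⟨h1, h2⟩ ℓ hℓ
        by_cases hli : ℓ = i
        · subst hli; simpa using h2
        · rw [Function.update_of_ne hli]
          exact h1 ℓ (by simp [hli, hℓ])
    have key : (∑ F : Face 𝒜, if (∀ ℓ ∉ insert i I, F.sgn ℓ = τ ℓ) ∧ (∃ x ∈ U, sg 𝒜 x = F.sgn)
        then (-1 : ℝ) ^ dm F.sgn else 0) =
        ∑ s : SignType, if ∃ x ∈ W, sg 𝒜 x i = s then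
          (-1 : ℝ) ^ Module.finrank ℝ
            (dirOn 𝒜 (fun ℓ => ℓ ∉ I ∧ Function.update τ i s ℓ = 0)) else 0 := by
      have : ∀ s : SignType, (if ∃ x ∈ W, sg 𝒜 x i = s then
          (-1 : ℝ) ^ Module.finrank ℝ
            (dirOn 𝒜 (fun ℓ => ℓ ∉ I ∧ Function.update τ i s ℓ = 0)) else 0) =
          ∑ F : Face 𝒜, if ((∀ ℓ ∉ insert i I, F.sgn ℓ = τ ℓ) ∧ (∃ x ∈ U, sg 𝒜 x = F.sgn)) ∧
            F.sgn i = s then (-1 : ℝ) ^ dm F.sgn else 0 := by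
        intro s
        have h := IH (Function.update τ i s)
        simp only [upd] at h
        rw [show (∃ x ∈ W, sg 𝒜 x i = s) ↔
          (∃ x ∈ U, (∀ ℓ ∉ insert i I, sg 𝒜 x ℓ = τ ℓ) ∧ sg 𝒜 x i = s) from
          ⟨fun ⟨x, hx, h⟩ => ⟨x, hx.1, hx.2, h⟩, fun ⟨x, h1, h2, h3⟩ => ⟨x, ⟨h1, h2⟩, h3⟩⟩]
        rw [← h]
        apply Finset.sum_congr rfl
        intro F _
        congr 1
        apply propext
        tauto
      simp_rw [this]
      rw [Finset.sum_comm]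
      apply Finset.sum_congr rfl
      intro F _
      by_cases hF : (∀ ℓ ∉ insert i I, F.sgn ℓ = τ ℓ) ∧ (∃ x ∈ U, sg 𝒜 x = F.sgn)
      · rw [if_pos hF, Finset.sum_congr rfl (fun s _ => if_congr (and_iff_right hF) rfl rfl)]
        simp
      · rw [if_neg hF, Finset.sum_eq_zero]
        intro s _
        exact if_neg fun h => hF h.1
    rw [key]
    have hne : ∀ s : SignType, s ≠ 0 →
        dirOn 𝒜 (fun ℓ => ℓ ∉ I ∧ Function.update τ i s ℓ = 0) = B := by
      intro s hs
      ext v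
      rw [hB, mem_dirOn, mem_dirOn]
      apply forall_congr'
      intro ℓ
      by_cases hli : ℓ = i
      · subst hli; simp [hs]
      · simp [hli]
    have hze : dirOn 𝒜 (fun ℓ => ℓ ∉ I ∧ Function.update τ i 0 ℓ = 0) =
        B ⊓ LinearMap.ker i.1.linear := by
      ext v
      rw [Submodule.mem_inf, hB, mem_dirOn, mem_dirOn, LinearMap.mem_ker]
      constructor
      · intro h
        refine ⟨fun ℓ hℓ => ?_, h i ⟨hi, by simp⟩⟩
        simp only [Finset.mem_insert, not_or] at hℓ
        exact h ℓ ⟨hℓ.1.2, by simp [hℓ.1.1, hℓ.2]⟩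
      · rintro ⟨h1, h2⟩ ℓ ⟨h3, h4⟩
        by_cases hli : ℓ = i
        · subst hli; exact h2
        · simp only [Function.update_of_ne hli] at h4
          exact h1 ℓ ⟨by simp [hli, h3], h4⟩
    have hsum : ∀ f : SignType → ℝ, ∑ s, f s = f 0 + f 1 + f (-1) := by
      intro f
      have : (Finset.univ : Finset SignType) = {0, 1, -1} := by decide
      rw [this, Finset.sum_insert (by decide), Finset.sum_insert (by decide), Finset.sum_singleton]
      ring
    rw [hsum, hne 1 (by decide), hne (-1) (by decide), hze]
    have move : ∀ x ∈ W, ∀ v ∈ B, ∀ᶠ ε : ℝ in 𝓝[>] 0, x + ε • v ∈ W := by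
      intro x hx v hv
      filter_upwards [germ 𝒜 x v, germ_open x v hU hx.1] with ε h1 h2
      refine ⟨h2, fun ℓ hℓ => ?_⟩
      have hs := hx.2 ℓ hℓ
      by_cases h0 : sg 𝒜 x ℓ = 0
      · rw [(h1 ℓ).2 h0, mem_dirOn.1 hv ℓ ⟨hℓ, by rw [← hs, h0]⟩, ← hs, h0, sign_zero]
      · rw [(h1 ℓ).1 h0, hs]
    have sub : ∀ x ∈ W, ∀ y ∈ W, x - y ∈ B := by
      intro x hx y hy
      rw [hB, mem_dirOn]
      rintro ℓ ⟨h1, h2⟩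
      have e1 := hx.2 ℓ h1
      have e2 := hy.2 ℓ h1
      rw [h2] at e1 e2
      simp only [sg, sign_eq_zero_iff] at e1 e2
      rw [aff_sub, e1, e2, sub_zero]
    have ee : (∃ x ∈ U, ∀ ℓ ∉ insert i I, sg 𝒜 x ℓ = τ ℓ) ↔ ∃ x, x ∈ W :=
      ⟨fun ⟨x, h1, h2⟩ => ⟨x, h1, h2⟩, fun ⟨x, h⟩ => ⟨x, h.1, h.2⟩⟩
    rw [if_congr ee rfl rfl]
    by_cases hp : ∃ x ∈ W, sg 𝒜 x i = 1
    · obtain ⟨x, hx, hxi⟩ := hp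
      by_cases hm : ∃ x ∈ W, sg 𝒜 x i = -1
      · obtain ⟨y, hy, hyi⟩ := hm
        have hxp : 0 < i.1 x := sign_eq_one_iff.1 hxi
        have hyp : i.1 y < 0 := sign_eq_neg_one_iff.1 hyi
        have hz : ∃ z ∈ W, sg 𝒜 z i = 0 := by
          have hd : 0 < i.1 x - i.1 y := by linarith
          have ha : 0 ≤ - i.1 y / (i.1 x - i.1 y) := div_nonneg (by linarith) hd.le
          have hb : 0 ≤ i.1 x / (i.1 x - i.1 y) := div_nonneg hxp.le hd.le
          have hab : - i.1 y / (i.1 x - i.1 y) + i.1 x / (i.1 x - i.1 y) = 1 := by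
            field_simp; ring
          refine ⟨_, ⟨hUc hx.1 hy.1 ha hb hab, convex_part hx.2 hy.2 ha hb hab⟩, ?_⟩
          simp only [sg]
          have := Convex.combo_affine_apply (f := i.1) (x := x) (y := y) hab
          rw [this, sign_eq_zero_iff]
          simp only [smul_eq_mul]
          field_simp; ring
        rw [if_pos hz, if_pos ⟨x, hx, hxi⟩, if_pos ⟨y, hy, hyi⟩, if_pos ⟨x, hx⟩,
          finrank_inf_ker B i.1.linear (sub x hx y hy) (by rw [aff_sub]; linarith)]
        ring
      · have hz : ¬ ∃ z ∈ W, sg 𝒜 z i = 0 := by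
          rintro ⟨y, hy, hyi⟩
          obtain ⟨ε, h1, h2⟩ := ((move y hy (y - x) (sub y hy x hx)).and
            (germ 𝒜 y (y - x))).exists
          apply hm
          refine ⟨_, h1, ?_⟩
          rw [(h2 i).2 hyi, aff_sub, sign_eq_neg_one_iff]
          have hxp : 0 < i.1 x := sign_eq_one_iff.1 hxi
          have hyp : i.1 y = 0 := sign_eq_zero_iff.1 hyi
          linarith
        rw [if_neg hz, if_pos ⟨x, hx, hxi⟩, if_neg hm, if_pos ⟨x, hx⟩]
        simp
    · by_cases hm : ∃ x ∈ W, sg 𝒜 x i = -1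
      · obtain ⟨x, hx, hxi⟩ := hm
        have hz : ¬ ∃ z ∈ W, sg 𝒜 z i = 0 := by
          rintro ⟨y, hy, hyi⟩
          obtain ⟨ε, h1, h2⟩ := ((move y hy (y - x) (sub y hy x hx)).and
            (germ 𝒜 y (y - x))).exists
          apply hp
          refine ⟨_, h1, ?_⟩
          rw [(h2 i).2 hyi, aff_sub, sign_eq_one_iff]
          have hxp : i.1 x < 0 := sign_eq_neg_one_iff.1 hxi
          have hyp : i.1 y = 0 := sign_eq_zero_iff.1 hyi
          linarith
        rw [if_neg hz, if_neg hp, if_pos ⟨x, hx, hxi⟩, if_pos ⟨x, hx⟩]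
        simp
      · have hall : ∀ x ∈ W, sg 𝒜 x i = 0 := by
          intro x hx
          rcases h : sg 𝒜 x i with _ | _ | _
          · rfl
          · exact absurd ⟨x, hx, h⟩ hm
          · exact absurd ⟨x, hx, h⟩ hp
        by_cases hW' : ∃ x, x ∈ W
        · obtain ⟨x, hx⟩ := hW'
          rw [if_pos ⟨x, hx, hall x hx⟩, if_neg hp, if_neg hm, if_pos ⟨x, hx⟩]
          have : B ⊓ LinearMap.ker i.1.linear = B := by
            rw [inf_eq_left]
            intro v hv
            obtain ⟨ε, h1, h2⟩ := ((move x hx v hv).and (germ 𝒜 x v)).exists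
            have h3 := hall _ h1
            rw [(h2 i).2 (hall x hx), sign_eq_zero_iff] at h3
            exact h3
          rw [this]; simp
        · rw [if_neg (fun ⟨x, hx, _⟩ => hW' ⟨x, hx⟩), if_neg hp, if_neg hm, if_neg hW']
          simp

open Classical in
/-- inclusion-exclusion -/
lemma incl_excl (I : Finset (Idx 𝒜)) (K : Idx 𝒜 → SignType) (hK : ∀ ℓ ∈ I, K ℓ ≠ 0)
    (g : Face 𝒜 → ℝ) :
    (∑ F : Face 𝒜, if (∀ ℓ ∉ I, F.sgn ℓ = K ℓ) ∧ (∀ ℓ ∈ I, F.sgn ℓ = 0 ∨ F.sgn ℓ = K ℓ)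
      then g F else 0) =
    ∑ S ∈ I.powerset, (-1 : ℝ) ^ S.card *
      ∑ F : Face 𝒜, if (∀ ℓ ∉ I, F.sgn ℓ = K ℓ) ∧ (∀ ℓ ∈ S, F.sgn ℓ = - K ℓ)
        then g F else 0 := by
  simp_rw [Finset.mul_sum]
  rw [Finset.sum_comm]
  apply Finset.sum_congr rfl
  intro F _
  by_cases h1 : ∀ ℓ ∉ I, F.sgn ℓ = K ℓ
  · rw [Finset.sum_congr rfl (fun S _ => congrArg _ (if_congr (and_iff_right h1) rfl rfl)),
      if_congr (and_iff_right h1) rfl rfl]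
    simp only [mul_ite, mul_zero]
    rw [← Finset.sum_filter]
    have : {S ∈ I.powerset | ∀ ℓ ∈ S, F.sgn ℓ = - K ℓ} =
        ({ℓ ∈ I | F.sgn ℓ = - K ℓ}).powerset := by
      ext S
      simp only [Finset.mem_filter, Finset.mem_powerset, Finset.subset_iff]
      constructor
      · rintro ⟨h1, h2⟩ x hx; exact ⟨h1 hx, h2 x hx⟩
      · intro h; exact ⟨fun x hx => (h hx).1, fun x hx => (h hx).2⟩
    rw [this, ← Finset.sum_mul]
    have h2 := Finset.sum_powerset_neg_one_pow_card (x := {ℓ ∈ I | F.sgn ℓ = - K ℓ})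
    have h3 : (∑ S ∈ ({ℓ ∈ I | F.sgn ℓ = - K ℓ}).powerset, (-1 : ℝ) ^ S.card) =
        if {ℓ ∈ I | F.sgn ℓ = - K ℓ} = ∅ then 1 else 0 := by
      have := congrArg (Int.cast : ℤ → ℝ) h2
      push_cast at this
      exact this
    rw [h3, ite_mul, one_mul, zero_mul]
    congr 1
    rw [Finset.filter_eq_empty_iff, eq_iff_iff]
    apply forall₂_congr
    intro ℓ hℓ
    have := hK ℓ hℓ
    revert this
    generalize F.sgn ℓ = a
    generalize K ℓ = b
    revert a b
    decide
  · rw [if_neg (fun h => h1 h.1), Finset.sum_eq_zero]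
    intro S _
    rw [if_neg (fun h => h1 h.1), mul_zero]

end EulerSection

section Combi

variable {n : ℕ} {𝒜 : Finset (AffForm n)}

open Filter Topology

/-- orthogonal projection to the direction space of a sign vector -/
def pr (σ : Idx 𝒜 → SignType) (z : V n) : V n := (dir σ).starProjection z

/-- face order on sign vectors -/
def fle (σ τ : Idx 𝒜 → SignType) : Prop := ∀ ℓ, σ ℓ = 0 ∨ σ ℓ = τ ℓ

/-- normal vectors -/
def Nrm (H D : Idx 𝒜 → SignType) (m : V n) : Prop :=
  ∀ f h : V n, sg 𝒜 f = D → sg 𝒜 h = H → inner ℝ m (f - h) ≤ 0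

/-- recession condition -/
def RecOK (H : Idx 𝒜 → SignType) (z : V n) : Prop :=
  ∀ ℓ : Idx 𝒜, ¬ dir H ≤ LinearMap.ker ℓ.1.linear → SignType.sign (ℓ.1.linear (pr H z)) = H ℓ

/-- limit cone of the normal cone decomposition -/
def KK (H D : Idx 𝒜 → SignType) (z : V n) : Prop := RecOK H z ∧ Nrm H D (z - pr H z)

/-- mixed cone -/
def MM (F K C : Idx 𝒜 → SignType) (z : V n) : Prop :=
  (∀ ℓ : Idx 𝒜, F ℓ = 0 → SignType.sign (ℓ.1.linear (pr K z)) = K ℓ) ∧ Nrm K C (z - pr K z)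

/-- generic vectors -/
structure Gen (𝒜 : Finset (AffForm n)) (z : V n) : Prop where
  one : ∀ (σ : Idx 𝒜 → SignType) (ℓ : Idx 𝒜), ¬ dir σ ≤ LinearMap.ker ℓ.1.linear →
    ℓ.1.linear (pr σ z) ≠ 0
  two : ∀ (σ τ : Idx 𝒜 → SignType), ¬ dir τ ≤ dir σ → ∃ y ∈ dir τ, inner ℝ (z - pr σ z) y ≠ 0

lemma fle.trans {a b c : Idx 𝒜 → SignType} (h1 : fle a b) (h2 : fle b c) : fle a c := by
  intro ℓ
  rcases h1 ℓ with h | h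
  · exact Or.inl h
  · rw [h]; exact h2 ℓ

lemma fle.refl (a : Idx 𝒜 → SignType) : fle a a := fun _ => Or.inr rfl

lemma fle.zero {a b : Idx 𝒜 → SignType} (h1 : fle a b) {ℓ} (h : b ℓ = 0) : a ℓ = 0 := by
  rcases h1 ℓ with h' | h'
  · exact h'
  · rw [h', h]

lemma fle.eq {a b : Idx 𝒜 → SignType} (h1 : fle a b) {ℓ} (h : a ℓ ≠ 0) : a ℓ = b ℓ :=
  (h1 ℓ).resolve_left h

lemma pr_mem (σ : Idx 𝒜 → SignType) (z : V n) : pr σ z ∈ dir σ :=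
  Submodule.starProjection_apply_mem _ _

lemma pr_inner (σ : Idx 𝒜 → SignType) (z : V n) {w : V n} (hw : w ∈ dir σ) :
    inner ℝ (z - pr σ z) w = 0 := Submodule.starProjection_inner_eq_zero _ _ hw

lemma pr_congr {σ τ : Idx 𝒜 → SignType} (h : dir σ = dir τ) (z : V n) : pr σ z = pr τ z := by
  simp only [pr, h]

lemma dir_mono {σ τ : Idx 𝒜 → SignType} (h : ∀ ℓ, τ ℓ = 0 → σ ℓ = 0) : dir σ ≤ dir τ :=
  fun _ hx => mem_dir.2 fun ℓ hℓ => mem_dir.1 hx ℓ (h ℓ hℓ)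

lemma dir_congr {σ τ : Idx 𝒜 → SignType} (h : ∀ ℓ, σ ℓ = 0 ↔ τ ℓ = 0) : dir σ = dir τ :=
  le_antisymm (dir_mono fun ℓ => (h ℓ).2) (dir_mono fun ℓ => (h ℓ).1)

lemma aff_zero {x : V n} {ℓ : Idx 𝒜} (h : sg 𝒜 x ℓ = 0) : ℓ.1 x = 0 := sign_eq_zero_iff.1 h

lemma sub_mem_dir {σ : Idx 𝒜 → SignType} {x y : V n} (hx : ∀ ℓ, σ ℓ = 0 → sg 𝒜 x ℓ = 0)
    (hy : ∀ ℓ, σ ℓ = 0 → sg 𝒜 y ℓ = 0) : x - y ∈ dir σ := by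
  rw [mem_dir]
  intro ℓ hℓ
  rw [aff_sub, aff_zero (hx ℓ hℓ), aff_zero (hy ℓ hℓ), sub_zero]

lemma Nrm_iff {H : Face 𝒜} {D : Idx 𝒜 → SignType} {m : V n}
    (hm : ∀ w ∈ dir H.sgn, inner ℝ m w = 0) :
    Nrm H.sgn D m ↔ ∀ f : V n, sg 𝒜 f = D → inner ℝ m (f - H.pt) ≤ 0 := by
  constructor
  · intro h f hf; exact h f _ hf H.sg_pt
  · intro h f k hf hk
    have h1 := h f hf
    have h2 := hm (H.pt - k) (sub_mem_dir (fun ℓ hℓ => by rw [H.sg_pt, hℓ])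
      (fun ℓ hℓ => by rw [hk, hℓ]))
    have : f - k = (f - H.pt) + (H.pt - k) := by abel
    rw [this, inner_add_right, h2, add_zero]
    exact h1

lemma half_open (m h : V n) : IsOpen {x : V n | 0 < inner ℝ m (x - h)} :=
  isOpen_lt (by fun_prop) (by fun_prop)

lemma half_convex (m h : V n) : Convex ℝ {x : V n | 0 < inner ℝ m (x - h)} := by
  intro x hx y hy a b ha hb hab
  simp only [Set.mem_ofPred_eq] at *
  have : a • x + b • y - h = a • (x - h) + b • (y - h) := by
    have : h = (a + b) • h := by rw [hab, one_smul]
    conv_lhs => rw [this]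
    module
  rw [this, inner_add_right, inner_smul_right, inner_smul_right]
  rcases eq_or_lt_of_le ha with h | h
  · have : b = 1 := by linarith
    rw [← h, this]; linarith
  · have := mul_pos h hx
    have := mul_nonneg hb hy.le
    linarith

open Classical in
lemma euler_diff {U : Set (V n)} (hU : IsOpen U) (hUc : Convex ℝ U) (I : Finset (Idx 𝒜))
    (τ : Idx 𝒜 → SignType) (hne : ∃ x, ∀ ℓ ∉ I, sg 𝒜 x ℓ = τ ℓ) :
    (∑ F : Face 𝒜, if (∀ ℓ ∉ I, F.sgn ℓ = τ ℓ) ∧ ¬ (∃ x ∈ U, sg 𝒜 x = F.sgn)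
      then (-1 : ℝ) ^ dm F.sgn else 0) =
    if ∃ x ∈ U, ∀ ℓ ∉ I, sg 𝒜 x ℓ = τ ℓ then 0 else
      (-1 : ℝ) ^ Module.finrank ℝ (dirOn 𝒜 (fun ℓ => ℓ ∉ I ∧ τ ℓ = 0)) := by
  have h1 := euler (𝒜 := 𝒜) Set.univ isOpen_univ convex_univ I τ
  have h2 := euler (𝒜 := 𝒜) U hU hUc I τ
  have h3 : ∃ x ∈ (Set.univ : Set (V n)), ∀ ℓ ∉ I, sg 𝒜 x ℓ = τ ℓ := by
    obtain ⟨x, hx⟩ := hne; exact ⟨x, trivial, hx⟩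
  rw [if_pos h3] at h1
  have h4 : (∑ F : Face 𝒜, if (∀ ℓ ∉ I, F.sgn ℓ = τ ℓ) ∧ ¬ (∃ x ∈ U, sg 𝒜 x = F.sgn)
      then (-1 : ℝ) ^ dm F.sgn else 0) =
      (∑ F : Face 𝒜, if (∀ ℓ ∉ I, F.sgn ℓ = τ ℓ) ∧
        (∃ x ∈ (Set.univ : Set (V n)), sg 𝒜 x = F.sgn) then (-1 : ℝ) ^ dm F.sgn else 0) -
      (∑ F : Face 𝒜, if (∀ ℓ ∉ I, F.sgn ℓ = τ ℓ) ∧ (∃ x ∈ U, sg 𝒜 x = F.sgn)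
      then (-1 : ℝ) ^ dm F.sgn else 0) := by
    rw [← Finset.sum_sub_distrib]
    apply Finset.sum_congr rfl
    intro F _
    have e : ∃ x ∈ (Set.univ : Set (V n)), sg 𝒜 x = F.sgn := ⟨F.pt, trivial, F.sg_pt⟩
    by_cases a : ∀ ℓ ∉ I, F.sgn ℓ = τ ℓ
    · by_cases b : ∃ x ∈ U, sg 𝒜 x = F.sgn
      · rw [if_neg (fun h => h.2 b), if_pos ⟨a, e⟩, if_pos ⟨a, b⟩, sub_self]
      · rw [if_pos ⟨a, b⟩, if_pos ⟨a, e⟩, if_neg (fun h => b h.2), sub_zero]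
    · rw [if_neg (fun h => a h.1), if_neg (fun h => a h.1), if_neg (fun h => a h.1), sub_zero]
  rw [h4, h1, h2]
  split_ifs <;> simp

open Classical in
lemma euler_diff2 {U : Set (V n)} (hU : IsOpen U) (hUc : Convex ℝ U) (I : Finset (Idx 𝒜))
    (K : Idx 𝒜 → SignType) (hK : ∀ ℓ ∈ I, K ℓ ≠ 0)
    (x : V n) (hxU : x ∈ U) (hx1 : ∀ ℓ ∉ I, sg 𝒜 x ℓ = K ℓ) (hx2 : ∀ ℓ ∈ I, sg 𝒜 x ℓ = - K ℓ) :
    (∑ F : Face 𝒜, if ((∀ ℓ ∉ I, F.sgn ℓ = K ℓ) ∧ (∀ ℓ ∈ I, F.sgn ℓ = 0 ∨ F.sgn ℓ = K ℓ)) ∧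
      ¬ (∃ x ∈ U, sg 𝒜 x = F.sgn) then (-1 : ℝ) ^ dm F.sgn else 0) = 0 := by
  have h := incl_excl I K hK
    (fun F => if ¬ (∃ x ∈ U, sg 𝒜 x = F.sgn) then (-1 : ℝ) ^ dm F.sgn else 0)
  simp only [← ite_and] at h
  rw [h]
  apply Finset.sum_eq_zero
  intro S hS
  rw [Finset.mem_powerset] at hS
  have key : ∀ ρ : Idx 𝒜 → SignType, ((∀ ℓ ∉ I, ρ ℓ = K ℓ) ∧ (∀ ℓ ∈ S, ρ ℓ = - K ℓ)) ↔
      ∀ ℓ ∉ I \ S, ρ ℓ = if ℓ ∈ S then - K ℓ else K ℓ := by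
    intro ρ
    constructor
    · rintro ⟨a, b⟩ ℓ hℓ
      by_cases hs : ℓ ∈ S
      · rw [if_pos hs, b ℓ hs]
      · rw [if_neg hs, a ℓ (fun h => hℓ (by simp [h, hs]))]
    · intro a
      refine ⟨fun ℓ hℓ => ?_, fun ℓ hℓ => ?_⟩
      · rw [a ℓ (by simp [hℓ]), if_neg (fun h => hℓ (hS h))]
      · rw [a ℓ (by simp [hℓ]), if_pos hℓ]
  have hx := (key (sg 𝒜 x)).1 ⟨hx1, fun ℓ hℓ => hx2 ℓ (hS hℓ)⟩
  have e := euler_diff (𝒜 := 𝒜) hU hUc (I \ S) (fun ℓ => if ℓ ∈ S then - K ℓ else K ℓ) ⟨x, hx⟩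
  rw [if_pos ⟨x, hxU, hx⟩] at e
  have e2 : ∀ F : Face 𝒜, (if ((∀ ℓ ∉ I, F.sgn ℓ = K ℓ) ∧ (∀ ℓ ∈ S, F.sgn ℓ = - K ℓ)) ∧
      ¬ (∃ x ∈ U, sg 𝒜 x = F.sgn) then (-1 : ℝ) ^ dm F.sgn else 0) =
      if (∀ ℓ ∉ I \ S, F.sgn ℓ = if ℓ ∈ S then - K ℓ else K ℓ) ∧
      ¬ (∃ x ∈ U, sg 𝒜 x = F.sgn) then (-1 : ℝ) ^ dm F.sgn else 0 := by
    intro F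
    exact if_congr (and_congr_left fun _ => key F.sgn) rfl rfl
  rw [Finset.sum_congr rfl (fun F _ => e2 F), e, mul_zero]

open Classical in
/-- McMullen-type relation -/
lemma mcmullen (G K : Face 𝒜) {z : V n} (hz : Gen 𝒜 z) (hGK : fle G.sgn K.sgn)
    (hne : G ≠ K) :
    (∑ F : Face 𝒜, if (fle G.sgn F.sgn ∧ fle F.sgn K.sgn) ∧
      Nrm G.sgn F.sgn (-(z - pr G.sgn z)) ∧
      (∀ ℓ : Idx 𝒜, F.sgn ℓ = 0 → SignType.sign (ℓ.1.linear (pr K.sgn z)) = K.sgn ℓ)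
      then (-1 : ℝ) ^ dm F.sgn else 0) = 0 := by
  have kg : K.pt - G.pt ∈ dir K.sgn := sub_mem_dir (fun ℓ h => by rw [K.sg_pt, h])
    (fun ℓ h => by rw [G.sg_pt, hGK.zero h])
  have gk : dir G.sgn ≤ dir K.sgn := dir_mono fun ℓ h => hGK.zero h
  have nz : ∀ ℓ : Idx 𝒜, G.sgn ℓ = 0 → K.sgn ℓ ≠ 0 → ℓ.1.linear (pr K.sgn z) ≠ 0 := by
    intro ℓ h1 h2
    apply hz.one
    intro h
    apply h2
    have := h kg
    rw [LinearMap.mem_ker, aff_sub, aff_zero (x := G.pt) (by rw [G.sg_pt, h1]), sub_zero] at this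
    rw [← K.sg_pt, sg, this, sign_zero]
  have prne : pr K.sgn z - pr G.sgn z ≠ 0 := by
    obtain ⟨ℓ, hℓ⟩ : ∃ ℓ, G.sgn ℓ ≠ K.sgn ℓ := by
      by_contra h
      push Not at h
      exact hne (Face.ext (funext h))
    have h0 : G.sgn ℓ = 0 := (hGK ℓ).resolve_right hℓ
    intro h
    apply nz ℓ h0 (fun h => hℓ (by rw [h0, h]))
    rw [sub_eq_zero.1 h]
    exact mem_dir.1 (pr_mem _ _) ℓ h0
  set m := z - pr G.sgn z with hm
  set I : Finset (Idx 𝒜) := {ℓ | G.sgn ℓ = 0 ∧ K.sgn ℓ ≠ 0 ∧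
    SignType.sign (ℓ.1.linear (pr K.sgn z)) = K.sgn ℓ} with hI
  have memI : ∀ ℓ, ℓ ∈ I ↔ G.sgn ℓ = 0 ∧ K.sgn ℓ ≠ 0 ∧
    SignType.sign (ℓ.1.linear (pr K.sgn z)) = K.sgn ℓ := by intro ℓ; simp [hI]
  have main := fun x hxU h1 h2 => euler_diff2 (𝒜 := 𝒜) (half_open (-m) G.pt)
    (half_convex (-m) G.pt) I K.sgn (fun ℓ h => ((memI ℓ).1 h).2.1) x hxU h1 h2
  obtain ⟨ε, hε, hεp⟩ := ((germ 𝒜 G.pt (-(pr K.sgn z - pr G.sgn z))).and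
    self_mem_nhdsWithin).exists
  simp only [G.sg_pt] at hε
  have hεp : 0 < ε := hεp
  have main := main (G.pt + ε • (-(pr K.sgn z - pr G.sgn z))) ?_ ?_ ?_
  · refine Eq.trans ?_ main
    apply Finset.sum_congr rfl
    intro F _
    apply if_congr _ rfl rfl
    rw [Nrm_iff (fun w hw => by rw [inner_neg_left, pr_inner _ _ hw, neg_zero])]
    have e1 : (∀ f : V n, sg 𝒜 f = F.sgn → inner ℝ (-m) (f - G.pt) ≤ 0) ↔
        ¬ ∃ x ∈ {x : V n | 0 < inner ℝ (-m) (x - G.pt)}, sg 𝒜 x = F.sgn := by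
      push Not
      constructor
      · intro h x hx hs; exact absurd (h x hs) (not_le.2 hx)
      · intro h f hf; by_contra hc; exact h f (not_le.1 hc) hf
    rw [e1]
    have e2 : ((fle G.sgn F.sgn ∧ fle F.sgn K.sgn) ∧
        (∀ ℓ : Idx 𝒜, F.sgn ℓ = 0 → SignType.sign (ℓ.1.linear (pr K.sgn z)) = K.sgn ℓ)) ↔
        ((∀ ℓ ∉ I, F.sgn ℓ = K.sgn ℓ) ∧ (∀ ℓ ∈ I, F.sgn ℓ = 0 ∨ F.sgn ℓ = K.sgn ℓ)) := by
      constructor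
      · rintro ⟨⟨h1, h2⟩, h3⟩
        refine ⟨fun ℓ hℓ => ?_, fun ℓ _ => h2 ℓ⟩
        rcases h2 ℓ with h | h
        · by_contra hc
          apply hℓ
          rw [memI]
          exact ⟨h1.zero h, fun h' => hc (by rw [h, h']), h3 ℓ h⟩
        · exact h
      · rintro ⟨h1, h2⟩
        refine ⟨⟨fun ℓ => ?_, fun ℓ => ?_⟩, fun ℓ hℓ => ?_⟩
        · by_cases h : ℓ ∈ I
          · exact Or.inl ((memI ℓ).1 h).1
          · rw [h1 ℓ h]; exact hGK ℓ
        · by_cases h : ℓ ∈ I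
          · exact h2 ℓ h
          · exact Or.inr (h1 ℓ h)
        · by_cases h : ℓ ∈ I
          · exact ((memI ℓ).1 h).2.2
          · rw [← h1 ℓ h, hℓ, mem_dir.1 (pr_mem K.sgn z) ℓ (by rw [← h1 ℓ h, hℓ]), sign_zero]
    rw [← e2]
    tauto
  · simp only [Set.mem_ofPred_eq, add_sub_cancel_left]
    rw [inner_smul_right, inner_neg_neg]
    apply mul_pos hεp
    have : m = (z - pr K.sgn z) + (pr K.sgn z - pr G.sgn z) := by rw [hm]; abel
    rw [this, inner_add_left, pr_inner _ _ (Submodule.sub_mem _ (pr_mem _ _) (gk (pr_mem _ _))),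
      zero_add]
    exact real_inner_self_pos.2 prne
  · intro ℓ hℓ
    by_cases h0 : G.sgn ℓ = 0
    · rw [(hε ℓ).2 h0]
      have hg : ℓ.1.linear (pr G.sgn z) = 0 := mem_dir.1 (pr_mem _ _) ℓ h0
      rw [map_neg, map_sub, hg, sub_zero]
      by_cases hk : K.sgn ℓ = 0
      · rw [mem_dir.1 (pr_mem K.sgn z) ℓ hk, hk]; simp
      · have a := nz ℓ h0 hk
        rw [memI] at hℓ
        push Not at hℓ
        have b := hℓ h0 hk
        rw [Left.sign_neg]
        have c : SignType.sign (ℓ.1.linear (pr K.sgn z)) ≠ 0 := by simpa using a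
        revert b c hk
        generalize SignType.sign (ℓ.1.linear (pr K.sgn z)) = p
        generalize K.sgn ℓ = q
        revert p q
        decide
    · rw [(hε ℓ).1 h0, hGK.eq h0]
  · intro ℓ hℓ
    obtain ⟨h0, hk, hs⟩ := (memI ℓ).1 hℓ
    rw [(hε ℓ).2 h0]
    have hg : ℓ.1.linear (pr G.sgn z) = 0 := mem_dir.1 (pr_mem _ _) ℓ h0
    rw [map_neg, map_sub, hg, sub_zero, Left.sign_neg, hs]

end Combi

section StepC

variable {n : ℕ} {𝒜 : Finset (AffForm n)}

open Filter Topology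

/-- relation between a face `H` and its modification `K = FH` -/
def RR (F H K : Face 𝒜) (z : V n) : Prop :=
  combineSgn F.sgn H.sgn = K.sgn ∧ (∀ ℓ, K.sgn ℓ = 0 ↔ H.sgn ℓ = 0) ∧ RecOK H.sgn z

lemma comb_zero {σ τ : Idx 𝒜 → SignType} {ℓ} (h : σ ℓ = 0) : combineSgn σ τ ℓ = τ ℓ := if_pos h
lemma comb_ne {σ τ : Idx 𝒜 → SignType} {ℓ} (h : σ ℓ ≠ 0) : combineSgn σ τ ℓ = σ ℓ := if_neg h

lemma faceOf_sgn (x : V n) : (faceOf 𝒜 x).sgn = sg 𝒜 x := rfl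

lemma exists_comb (F H : Face 𝒜) : ∃ K : Face 𝒜, combineSgn F.sgn H.sgn = K.sgn := by
  obtain ⟨ε, hε⟩ := (germ 𝒜 F.pt (H.pt - F.pt)).exists
  refine ⟨faceOf 𝒜 (F.pt + ε • (H.pt - F.pt)), ?_⟩
  funext ℓ
  simp only [F.sg_pt] at hε
  by_cases h : F.sgn ℓ = 0
  · rw [comb_zero h, faceOf_sgn, (hε ℓ).2 h, aff_sub, aff_zero (x := F.pt) (by rw [F.sg_pt, h]),
      sub_zero, ← H.sg_pt, sg]
  · rw [comb_ne h, faceOf_sgn, (hε ℓ).1 h]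

/-- The key equivalence for the inner sum. -/
lemma inner_iff (F C H : Face 𝒜) (hFC : fle F.sgn C.sgn) {z : V n} (hz : Gen 𝒜 z)
    (hR : RecOK H.sgn z) :
    ((∀ ℓ, F.sgn ℓ = 0 → H.sgn ℓ ≠ 0 → H.sgn ℓ = C.sgn ℓ) ∧
      ∀ x : V n, (∀ ℓ, (H.sgn ℓ ≠ 0 ∨ F.sgn ℓ = 0) → sg 𝒜 x ℓ = combineSgn H.sgn C.sgn ℓ) →
        inner ℝ (z - pr H.sgn z) (x - H.pt) ≤ 0) ↔
    ∃ K : Face 𝒜, RR F H K z ∧ fle K.sgn C.sgn ∧ MM F.sgn K.sgn C.sgn z := by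
  set m := z - pr H.sgn z with hm
  constructor
  · rintro ⟨hc, hx⟩
    obtain ⟨K, hK⟩ := exists_comb F H
    have K0 : ∀ ℓ, K.sgn ℓ = 0 ↔ F.sgn ℓ = 0 ∧ H.sgn ℓ = 0 := by
      intro ℓ
      rw [← hK]
      by_cases h : F.sgn ℓ = 0
      · rw [comb_zero h]; simp [h]
      · rw [comb_ne h]; simp [h]
    have KC : fle K.sgn C.sgn := by
      intro ℓ
      rw [← hK]
      by_cases h : F.sgn ℓ = 0
      · rw [comb_zero h]
        by_cases h' : H.sgn ℓ = 0
        · exact Or.inl h'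
        · exact Or.inr (hc ℓ h h')
      · rw [comb_ne h]; exact hFC ℓ
    have dHK : dir H.sgn ≤ dir K.sgn := dir_mono fun ℓ h => ((K0 ℓ).1 h).2
    have hf : H.pt - F.pt ∈ dir K.sgn := sub_mem_dir
      (fun ℓ h => by rw [H.sg_pt, ((K0 ℓ).1 h).2]) (fun ℓ h => by rw [F.sg_pt, ((K0 ℓ).1 h).1])
    have mv : ∀ v : V n, (∀ ℓ : Idx 𝒜, F.sgn ℓ = 0 → H.sgn ℓ = 0 →
        SignType.sign (ℓ.1.linear v) = C.sgn ℓ) → inner ℝ m v ≤ 0 := by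
      intro v hv
      obtain ⟨ε, hε, hεp⟩ := ((germ 𝒜 H.pt v).and self_mem_nhdsWithin).exists
      have hεp : 0 < ε := hεp
      simp only [H.sg_pt] at hε
      have := hx (H.pt + ε • v) (by
        intro ℓ hℓ
        by_cases h : H.sgn ℓ = 0
        · have hF := hℓ.resolve_left (fun h' => h' h)
          rw [(hε ℓ).2 h, comb_zero h, hv ℓ hF h]
        · rw [(hε ℓ).1 h, comb_ne h])
      rw [add_sub_cancel_left, inner_smul_right] at this
      by_contra hcon
      push Not at hcon
      have := mul_pos hεp hcon
      linarith
    have dKH : dir K.sgn ≤ dir H.sgn := by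
      by_contra hcon
      obtain ⟨y, hy, hym⟩ := hz.two H.sgn K.sgn hcon
      have := mv ((C.pt - F.pt) + ((1 - inner ℝ m (C.pt - F.pt)) / inner ℝ m y) • y) (by
        intro ℓ h1 h2
        rw [map_add, map_smul, mem_dir.1 hy ℓ ((K0 ℓ).2 ⟨h1, h2⟩), smul_zero, add_zero, aff_sub,
          aff_zero (x := F.pt) (by rw [F.sg_pt, h1]), sub_zero, ← C.sg_pt, sg])
      rw [inner_add_right, inner_smul_right, div_mul_cancel₀ _ hym] at this
      linarith
    have dd : dir H.sgn = dir K.sgn := le_antisymm dHK dKH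
    have zz : ∀ ℓ, K.sgn ℓ = 0 ↔ H.sgn ℓ = 0 := by
      intro ℓ
      rw [K0]
      refine ⟨fun h => h.2, fun h => ⟨?_, h⟩⟩
      have := mem_dir.1 (dKH hf) ℓ h
      rw [aff_sub, aff_zero (x := H.pt) (by rw [H.sg_pt, h])] at this
      rw [← F.sg_pt, sg, sign_eq_zero_iff]
      linarith
    refine ⟨K, ⟨hK, zz, hR⟩, KC, ?_, ?_⟩
    · intro ℓ hℓ
      rw [← pr_congr dd, ← hK, comb_zero hℓ]
      by_cases hk : dir H.sgn ≤ LinearMap.ker ℓ.1.linear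
      · have h1 : ℓ.1.linear (pr H.sgn z) = 0 := hk (pr_mem _ _)
        have h2 : ℓ.1.linear (H.pt - F.pt) = 0 := hk (dKH hf)
        rw [aff_sub, aff_zero (x := F.pt) (by rw [F.sg_pt, hℓ]), sub_zero] at h2
        rw [h1, ← H.sg_pt, sg, h2]
      · exact hR ℓ hk
    · intro c k hcc hkk
      rw [← pr_congr dd]
      apply mv
      intro ℓ h1 h2
      rw [aff_sub, aff_zero (x := k) (by rw [hkk, (zz ℓ).2 h2]), sub_zero, ← hcc, sg]
  · rintro ⟨K, ⟨hK, zz, -⟩, KC, -, hN⟩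
    have dd : dir H.sgn = dir K.sgn := dir_congr fun ℓ => (zz ℓ).symm
    refine ⟨fun ℓ h1 h2 => ?_, fun x hx => ?_⟩
    · have : K.sgn ℓ = H.sgn ℓ := by rw [← hK, comb_zero h1]
      rw [← this]
      exact KC.eq (by rwa [this])
    · obtain ⟨ε, hε, hεp⟩ := ((germ 𝒜 K.pt (x - H.pt)).and self_mem_nhdsWithin).exists
      have hεp : 0 < ε := hεp
      simp only [K.sg_pt] at hε
      have := hN (K.pt + ε • (x - H.pt)) K.pt (by
        funext ℓ
        by_cases h : K.sgn ℓ = 0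
        · have hH := (zz ℓ).1 h
          have hF : F.sgn ℓ = 0 := by
            by_contra hF
            rw [← hK, comb_ne hF] at h
            exact hF h
          rw [(hε ℓ).2 h, aff_sub, aff_zero (x := H.pt) (by rw [H.sg_pt, hH]), sub_zero]
          have := hx ℓ (Or.inr hF)
          rw [comb_zero hH] at this
          exact this
        · rw [(hε ℓ).1 h, KC.eq h]) K.sg_pt
      rw [add_sub_cancel_left, inner_smul_right, ← pr_congr dd] at this
      by_contra hcon
      push Not at hcon
      have := mul_pos hεp hcon
      linarith

open Classical in
lemma inner_sum (F C H : Face 𝒜) (hFC : fle F.sgn C.sgn) {z : V n} (hz : Gen 𝒜 z)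
    (hR : RecOK H.sgn z) :
    (∑ D : Face 𝒜, if combineSgn F.sgn D.sgn = C.sgn ∧ fle H.sgn D.sgn ∧
      Nrm H.sgn D.sgn (z - pr H.sgn z) then (-1 : ℝ) ^ dm D.sgn else 0) =
    if ∃ K : Face 𝒜, RR F H K z ∧ fle K.sgn C.sgn ∧ MM F.sgn K.sgn C.sgn z then
      (-1 : ℝ) ^ dm C.sgn else 0 := by
  rw [if_congr (inner_iff F C H hFC hz hR).symm rfl rfl]
  set m := z - pr H.sgn z with hm
  by_cases hc : ∀ ℓ, F.sgn ℓ = 0 → H.sgn ℓ ≠ 0 → H.sgn ℓ = C.sgn ℓ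
  · set I : Finset (Idx 𝒜) := {ℓ | H.sgn ℓ = 0 ∧ F.sgn ℓ ≠ 0} with hI
    have memI : ∀ ℓ, ℓ ∉ I ↔ (H.sgn ℓ ≠ 0 ∨ F.sgn ℓ = 0) := by
      intro ℓ; simp only [hI, Finset.mem_filter, Finset.mem_univ, true_and]; tauto
    have hne : ∃ x, ∀ ℓ ∉ I, sg 𝒜 x ℓ = combineSgn H.sgn C.sgn ℓ := by
      obtain ⟨ε, hε⟩ := (germ 𝒜 H.pt (C.pt - F.pt)).exists
      simp only [H.sg_pt] at hε
      refine ⟨H.pt + ε • (C.pt - F.pt), fun ℓ hℓ => ?_⟩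
      rw [memI] at hℓ
      by_cases h : H.sgn ℓ = 0
      · have hF := hℓ.resolve_left (fun h' => h' h)
        rw [(hε ℓ).2 h, comb_zero h, aff_sub, aff_zero (x := F.pt) (by rw [F.sg_pt, hF]), sub_zero,
          ← C.sg_pt, sg]
      · rw [(hε ℓ).1 h, comb_ne h]
    have main := euler_diff (𝒜 := 𝒜) (half_open m H.pt) (half_convex m H.pt) I
      (combineSgn H.sgn C.sgn) hne
    have e1 : dirOn 𝒜 (fun ℓ => ℓ ∉ I ∧ combineSgn H.sgn C.sgn ℓ = 0) = dir C.sgn := by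
      rw [dir]
      congr 1
      funext ℓ
      rw [memI, eq_iff_iff]
      constructor
      · rintro ⟨h1, h2⟩
        by_cases h : H.sgn ℓ = 0
        · rwa [comb_zero h] at h2
        · rw [comb_ne h] at h2; exact absurd h2 h
      · intro h
        have hF := hFC.zero h
        have hH : H.sgn ℓ = 0 := by
          by_contra hH
          exact hH (by rw [hc ℓ hF hH, h])
        exact ⟨Or.inr hF, by rw [comb_zero hH, h]⟩
    rw [e1] at main
    rw [if_congr (and_iff_right hc) rfl rfl]
    have e2 : (∑ D : Face 𝒜, if combineSgn F.sgn D.sgn = C.sgn ∧ fle H.sgn D.sgn ∧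
      Nrm H.sgn D.sgn m then (-1 : ℝ) ^ dm D.sgn else 0) =
      (∑ D : Face 𝒜, if (∀ ℓ ∉ I, D.sgn ℓ = combineSgn H.sgn C.sgn ℓ) ∧
        ¬ (∃ x ∈ {x : V n | 0 < inner ℝ m (x - H.pt)}, sg 𝒜 x = D.sgn)
      then (-1 : ℝ) ^ dm D.sgn else 0) := by
      apply Finset.sum_congr rfl
      intro D _
      apply if_congr _ rfl rfl
      rw [Nrm_iff (fun w hw => pr_inner _ _ hw), ← and_assoc]
      apply and_congr
      · constructor
        · rintro ⟨h1, h2⟩ ℓ hℓ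
          rw [memI] at hℓ
          by_cases h : H.sgn ℓ = 0
          · have hF := hℓ.resolve_left (fun h' => h' h)
            rw [comb_zero h, ← h1, comb_zero hF]
          · rw [comb_ne h, h2.eq h]
        · intro h1
          constructor
          · funext ℓ
            by_cases hF : F.sgn ℓ = 0
            · rw [comb_zero hF, h1 ℓ ((memI ℓ).2 (Or.inr hF))]
              by_cases h : H.sgn ℓ = 0
              · rw [comb_zero h]
              · rw [comb_ne h, hc ℓ hF h]
            · rw [comb_ne hF, hFC.eq hF]
          · intro ℓ
            by_cases h : H.sgn ℓ = 0
            · exact Or.inl h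
            · right
              rw [h1 ℓ ((memI ℓ).2 (Or.inl h)), comb_ne h]
      · push Not
        constructor
        · intro h x hx hs; exact absurd (h x hs) (not_le.2 hx)
        · intro h f hf; by_contra hc; exact h f (not_le.1 hc) hf
    rw [e2, main]
    by_cases h : ∃ x ∈ {x : V n | 0 < inner ℝ m (x - H.pt)},
        ∀ ℓ ∉ I, sg 𝒜 x ℓ = combineSgn H.sgn C.sgn ℓ
    · rw [if_pos h, if_neg]
      intro h'
      obtain ⟨x, hx1, hx2⟩ := h
      exact absurd (h' x fun ℓ hℓ => hx2 ℓ ((memI ℓ).2 hℓ)) (not_le.2 hx1)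
    · rw [if_neg h, if_pos, dm]
      intro x hx
      by_contra hcon
      exact h ⟨x, not_le.1 hcon, fun ℓ hℓ => hx ℓ ((memI ℓ).1 hℓ)⟩
  · rw [if_neg (fun h => hc h.1), Finset.sum_eq_zero]
    intro D _
    rw [if_neg]
    rintro ⟨h1, h2, -⟩
    apply hc
    intro ℓ hF hH
    rw [← h1, comb_zero hF, h2.eq hH]

lemma exists_unique_RR (F C K : Face 𝒜) (hFK : fle F.sgn K.sgn)
    {z : V n} (hz : Gen 𝒜 z) (hM : MM F.sgn K.sgn C.sgn z) : ∃! H : Face 𝒜, RR F H K z := by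
  have uniq : ∀ H : Face 𝒜, RR F H K z → ∀ ℓ : Idx 𝒜,
      (dir K.sgn ≤ LinearMap.ker ℓ.1.linear → H.sgn ℓ = K.sgn ℓ) ∧
      (¬ dir K.sgn ≤ LinearMap.ker ℓ.1.linear →
        H.sgn ℓ = SignType.sign (ℓ.1.linear (pr K.sgn z))) := by
    rintro H ⟨hK, zz, hR⟩ ℓ
    have dd : dir H.sgn = dir K.sgn := dir_congr fun ℓ => (zz ℓ).symm
    constructor
    · intro h
      have : H.pt - K.pt ∈ dir K.sgn := sub_mem_dir
        (fun ℓ h => by rw [H.sg_pt, (zz ℓ).1 h]) (fun ℓ h => by rw [K.sg_pt, h])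
      have := h this
      rw [LinearMap.mem_ker, aff_sub, sub_eq_zero] at this
      rw [← H.sg_pt, ← K.sg_pt, sg, sg, this]
    · intro h
      rw [← dd] at h
      rw [← hR ℓ h, pr_congr dd]
  obtain ⟨r, hr⟩ := (germ_top 𝒜 K.pt (pr K.sgn z)).exists
  simp only [K.sg_pt] at hr
  have zz : ∀ ℓ, K.sgn ℓ = 0 ↔ (faceOf 𝒜 (K.pt + r • pr K.sgn z)).sgn ℓ = 0 := by
    intro ℓ
    rw [faceOf_sgn]
    constructor
    · intro h
      rw [(hr ℓ).1 (mem_dir.1 (pr_mem _ _) ℓ h), h]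
    · intro h
      by_cases h' : ℓ.1.linear (pr K.sgn z) = 0
      · rwa [(hr ℓ).1 h'] at h
      · rw [(hr ℓ).2 h'] at h
        exact absurd (sign_eq_zero_iff.1 h) h'
  have hex : RR F (faceOf 𝒜 (K.pt + r • pr K.sgn z)) K z := by
    refine ⟨?_, zz, ?_⟩
    · funext ℓ
      by_cases hF : F.sgn ℓ = 0
      · rw [comb_zero hF, faceOf_sgn]
        by_cases h' : ℓ.1.linear (pr K.sgn z) = 0
        · rw [(hr ℓ).1 h']
        · rw [(hr ℓ).2 h', hM.1 ℓ hF]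
      · rw [comb_ne hF, hFK.eq hF]
    · have dd := dir_congr fun ℓ => (zz ℓ).symm
      intro ℓ hℓ
      rw [pr_congr dd]
      rw [dd] at hℓ
      rw [faceOf_sgn, (hr ℓ).2 (hz.one _ _ hℓ)]
  refine ⟨_, hex, fun H hH => ?_⟩
  ext1
  funext ℓ
  by_cases h : dir K.sgn ≤ LinearMap.ker ℓ.1.linear
  · rw [(uniq _ hH ℓ).1 h, (uniq _ hex ℓ).1 h]
  · rw [(uniq _ hH ℓ).2 h, (uniq _ hex ℓ).2 h]

open Classical in
lemma stepC1 (F C : Face 𝒜) (hFC : fle F.sgn C.sgn) {z : V n} (hz : Gen 𝒜 z) (w : ℕ → ℝ) :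
    (∑ D : Face 𝒜, ∑ H : Face 𝒜, if combineSgn F.sgn D.sgn = C.sgn ∧ fle H.sgn D.sgn ∧
      KK H.sgn D.sgn z then (-1 : ℝ) ^ dm D.sgn * w (dm H.sgn) else 0) =
    ∑ K : Face 𝒜, if fle F.sgn K.sgn ∧ fle K.sgn C.sgn ∧ MM F.sgn K.sgn C.sgn z then
      (-1 : ℝ) ^ dm C.sgn * w (dm K.sgn) else 0 := by
  rw [Finset.sum_comm]
  have A : ∀ H : Face 𝒜, (∑ D : Face 𝒜, if combineSgn F.sgn D.sgn = C.sgn ∧ fle H.sgn D.sgn ∧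
      KK H.sgn D.sgn z then (-1 : ℝ) ^ dm D.sgn * w (dm H.sgn) else 0) =
      ∑ K : Face 𝒜, if RR F H K z ∧ fle K.sgn C.sgn ∧ MM F.sgn K.sgn C.sgn z then
      (-1 : ℝ) ^ dm C.sgn * w (dm K.sgn) else 0 := by
    intro H
    by_cases hR : RecOK H.sgn z
    · have e := inner_sum F C H hFC hz hR
      have e' : (∑ D : Face 𝒜, if combineSgn F.sgn D.sgn = C.sgn ∧ fle H.sgn D.sgn ∧
          KK H.sgn D.sgn z then (-1 : ℝ) ^ dm D.sgn * w (dm H.sgn) else 0) =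
          (∑ D : Face 𝒜, if combineSgn F.sgn D.sgn = C.sgn ∧ fle H.sgn D.sgn ∧
          Nrm H.sgn D.sgn (z - pr H.sgn z) then (-1 : ℝ) ^ dm D.sgn else 0) * w (dm H.sgn) := by
        rw [Finset.sum_mul]
        apply Finset.sum_congr rfl
        intro D _
        rw [ite_mul, zero_mul]
        apply if_congr _ rfl rfl
        rw [KK, and_iff_right hR]
      rw [e', e]
      by_cases h : ∃ K : Face 𝒜, RR F H K z ∧ fle K.sgn C.sgn ∧ MM F.sgn K.sgn C.sgn z
      · rw [if_pos h]
        obtain ⟨K, hK⟩ := h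
        rw [Finset.sum_eq_single K, if_pos hK]
        · have : dm H.sgn = dm K.sgn := by
            rw [dm, dm, dir_congr fun ℓ => (hK.1.2.1 ℓ).symm]
          rw [this]
        · intro K' _ hne
          rw [if_neg]
          rintro ⟨h1, -⟩
          apply hne
          ext1
          rw [← h1.1, hK.1.1]
        · simp
      · rw [if_neg h, zero_mul, Finset.sum_eq_zero]
        intro K _
        rw [if_neg]
        exact fun h' => h ⟨K, h'⟩
    · rw [Finset.sum_eq_zero, Finset.sum_eq_zero]
      · intro K _
        exact if_neg fun h => hR h.1.2.2
      · intro D _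
        exact if_neg fun h => hR h.2.2.1
  rw [Finset.sum_congr rfl (fun H _ => A H), Finset.sum_comm]
  apply Finset.sum_congr rfl
  intro K _
  by_cases h : fle F.sgn K.sgn ∧ fle K.sgn C.sgn ∧ MM F.sgn K.sgn C.sgn z
  · rw [if_pos h]
    obtain ⟨H, hH, hu⟩ := exists_unique_RR F C K h.1 hz h.2.2
    rw [Finset.sum_eq_single H, if_pos ⟨hH, h.2⟩]
    · intro H' _ hne
      exact if_neg fun h => hne (hu H' h.1)
    · simp
  · rw [if_neg h, Finset.sum_eq_zero]
    intro H _
    rw [if_neg]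
    rintro ⟨h1, h2⟩
    refine h ⟨fun ℓ => ?_, h2⟩
    by_cases hF : F.sgn ℓ = 0
    · exact Or.inl hF
    · right; rw [← h1.1, comb_ne hF]

end StepC

section Meas

variable {n : ℕ}

open Filter Topology

/-- uniform probability measure on the unit ball -/
def PB (n : ℕ) : Measure (V n) := ProbabilityTheory.cond volume (Metric.ball (0 : V n) 1)

/-- solid angle -/
def gam (A : Set (V n)) : ℝ := (PB n).real A

lemma ball_ne_zero : volume (Metric.ball (0 : V n) 1) ≠ 0 :=
  (Metric.measure_ball_pos volume _ one_pos).ne'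

lemma ball_ne_top : volume (Metric.ball (0 : V n) 1) ≠ ⊤ := measure_ball_lt_top.ne

instance : IsProbabilityMeasure (PB n) :=
  ProbabilityTheory.cond_isProbabilityMeasure_of_finite ball_ne_zero ball_ne_top

lemma PB_ac : PB n ≪ volume := ProbabilityTheory.cond_absolutelyContinuous

lemma ae_PB {p : V n → Prop} (h : ∀ᵐ z ∂(volume : Measure (V n)), p z) : ∀ᵐ z ∂(PB n), p z :=
  PB_ac.ae_le h

lemma PB_apply (A : Set (V n)) : PB n A =
    (volume (Metric.ball (0 : V n) 1))⁻¹ * volume (A ∩ Metric.ball (0 : V n) 1) := by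
  rw [PB, ProbabilityTheory.cond_apply measurableSet_ball, Set.inter_comm]

lemma gam_eq (A : Set (V n)) : gam A =
    (volume (A ∩ Metric.ball (0 : V n) 1)).toReal / (volume (Metric.ball (0 : V n) 1)).toReal := by
  rw [gam, Measure.real, PB_apply, ENNReal.toReal_mul, ENNReal.toReal_inv, div_eq_inv_mul]

open Classical in
lemma gam_int {A : Set (V n)} (hA : MeasurableSet A) (c : ℝ) :
    ∫ z, (if z ∈ A then c else 0) ∂(PB n) = c * gam A := by
  have : (fun z => if z ∈ A then c else 0) = A.indicator (fun _ => c) := by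
    funext z; simp [Set.indicator_apply]
  rw [this, integral_indicator hA, setIntegral_const, smul_eq_mul, mul_comm, gam]

open Classical in
lemma gam_integrable {A : Set (V n)} (hA : MeasurableSet A) (c : ℝ) :
    Integrable (fun z => if z ∈ A then c else 0) (PB n) := by
  have : (fun z => if z ∈ A then c else 0) = A.indicator (fun _ => c) := by
    funext z; simp [Set.indicator_apply]
  rw [this]
  exact (integrable_const c).indicator hA

open Classical in
lemma gam_lin {ι : Type*} (s : Finset ι) (c : ι → ℝ) (A : ι → Set (V n))
    (hA : ∀ i ∈ s, MeasurableSet (A i)) :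
    ∫ z, ∑ i ∈ s, (if z ∈ A i then c i else 0) ∂(PB n) = ∑ i ∈ s, c i * gam (A i) := by
  rw [integral_finsetSum _ (fun i hi => gam_integrable (hA i hi) _)]
  exact Finset.sum_congr rfl fun i hi => gam_int (hA i hi) _

open Classical in
/-- transfer an almost everywhere linear relation between indicators to solid angles -/
lemma gam_rel {ι κ : Type*} (s : Finset ι) (c : ι → ℝ) (A : ι → Set (V n))
    (hA : ∀ i ∈ s, MeasurableSet (A i)) (t : Finset κ) (e : κ → ℝ) (B : κ → Set (V n))
    (hB : ∀ i ∈ t, MeasurableSet (B i))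
    (h : ∀ᵐ z ∂(volume : Measure (V n)), ∑ i ∈ s, (if z ∈ A i then c i else 0) =
      ∑ i ∈ t, (if z ∈ B i then e i else 0)) :
    ∑ i ∈ s, c i * gam (A i) = ∑ i ∈ t, e i * gam (B i) := by
  rw [← gam_lin s c A hA, ← gam_lin t e B hB]
  exact integral_congr_ae (ae_PB h)

lemma gam_congr {A B : Set (V n)} (h : ∀ᵐ z ∂(volume : Measure (V n)), z ∈ A ↔ z ∈ B) :
    gam A = gam B := by
  rw [gam, gam, Measure.real, Measure.real]
  congr 1
  apply measure_congr
  filter_upwards [ae_PB h] with z hz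
  exact propext hz

/-- scaling -/
lemma vol_scale (S : Set (V n)) {R : ℝ} (hR : 0 < R) :
    volume (S ∩ Metric.ball (0 : V n) R) =
    ENNReal.ofReal (R ^ n) * volume ({z | R • z ∈ S} ∩ Metric.ball (0 : V n) 1) := by
  have := Measure.addHaar_smul_of_nonneg (volume : Measure (V n)) hR.le
    ({z | R • z ∈ S} ∩ Metric.ball (0 : V n) 1)
  rw [finrank_euclideanSpace, Fintype.card_fin] at this
  rw [← this]
  congr 1
  ext x
  rw [Set.mem_smul_set_iff_inv_smul_mem₀ hR.ne']
  simp only [Set.mem_inter_iff, Metric.mem_ball, dist_zero_right, Set.mem_ofPred_eq,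
    smul_inv_smul₀ hR.ne', norm_smul, norm_inv, Real.norm_eq_abs, abs_of_pos hR]
  rw [inv_mul_lt_iff₀ hR, mul_one]

lemma gam_tendsto {S A : Set (V n)} (hS : MeasurableSet S) (hA : MeasurableSet A)
    (h : ∀ᵐ z ∂(volume : Measure (V n)), ∀ᶠ R : ℝ in atTop, R • z ∈ S ↔ z ∈ A) :
    Tendsto (fun R : ℝ =>
      (volume (S ∩ Metric.ball (0 : V n) R)).toReal /
        (volume (Metric.ball (0 : V n) R)).toReal) atTop (𝓝 (gam A)) := by
  have h1 : Tendsto (fun R : ℝ => PB n {z | R • z ∈ S}) atTop (𝓝 (PB n A)) := by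
    apply tendsto_measure_of_ae_tendsto_indicator_of_isFiniteMeasure atTop hA
    · intro R
      exact (measurable_const_smul R) hS
    · filter_upwards [ae_PB h] with z hz
      exact hz
  have h2 : Tendsto (fun R : ℝ => (PB n).real {z | R • z ∈ S}) atTop (𝓝 (gam A)) :=
    (ENNReal.tendsto_toReal (measure_ne_top _ _)).comp h1
  refine h2.congr' ?_
  filter_upwards [eventually_gt_atTop 0] with R hR
  rw [Measure.real, PB_apply, ENNReal.toReal_mul, vol_scale S hR]
  have e : volume (Metric.ball (0 : V n) R) =
      ENNReal.ofReal (R ^ n) * volume (Metric.ball (0 : V n) 1) := by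
    have := vol_scale (Set.univ : Set (V n)) hR
    simpa using this
  have hp : 0 < R ^ n := pow_pos hR n
  have hb : (volume (Metric.ball (0 : V n) 1)).toReal ≠ 0 :=
    ENNReal.toReal_ne_zero.2 ⟨ball_ne_zero, ball_ne_top⟩
  rw [e, ENNReal.toReal_mul, ENNReal.toReal_mul, ENNReal.toReal_ofReal hp.le, ENNReal.toReal_inv]
  field_simp

/-- Gaussian weight -/
def gw {E : Type*} [NormedAddCommGroup E] (x : E) : ENNReal := ENNReal.ofReal (Real.exp (- ‖x‖ ^ 2))

lemma gw_meas {E : Type*} [NormedAddCommGroup E] [MeasurableSpace E] [BorelSpace E] :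
    Measurable (gw : E → ENNReal) := by
  unfold gw
  fun_prop

/-- layer cake for cones -/
lemma gauss_cone : ∃ c : ENNReal, ∀ A : Set (V n), MeasurableSet A →
    (∀ x ∈ A, ∀ r : ℝ, 0 < r → r • x ∈ A) →
    ∫⁻ x in A, gw x = c * volume (A ∩ Metric.ball (0 : V n) 1) := by
  refine ⟨∫⁻ t in Set.Ioi (0 : ℝ), if t < 1 then ENNReal.ofReal (Real.sqrt (- Real.log t) ^ n)
    else 0, fun A hA hc => ?_⟩
  unfold gw
  rw [lintegral_eq_lintegral_meas_lt (volume.restrict A)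
    (Eventually.of_forall fun x => (Real.exp_pos _).le) (by fun_prop)]
  rw [← lintegral_mul_const']
  · apply setLIntegral_congr_fun measurableSet_Ioi
    intro t ht
    have ht : 0 < t := ht
    simp only
    rw [Measure.restrict_apply (measurableSet_lt measurable_const (by fun_prop))]
    by_cases h1 : t < 1
    · rw [if_pos h1]
      have hl : 0 < - Real.log t := by have := Real.log_neg ht h1; linarith
      have hs : 0 < Real.sqrt (- Real.log t) := Real.sqrt_pos.2 hl
      have := vol_scale A hs
      have e : {z : V n | Real.sqrt (- Real.log t) • z ∈ A} = A := by
        ext z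
        refine ⟨fun h => ?_, fun h => hc z h _ hs⟩
        have := hc _ h _ (inv_pos.2 hs)
        rwa [inv_smul_smul₀ hs.ne'] at this
      rw [e] at this
      rw [← this, Set.inter_comm]
      congr 2
      ext x
      simp only [Set.mem_ofPred_eq, Metric.mem_ball, dist_zero_right]
      rw [← Real.log_lt_iff_lt_exp ht, Real.lt_sqrt (norm_nonneg _)]
      constructor <;> intro h <;> linarith
    · rw [if_neg h1, zero_mul]
      have : {a : V n | t < Real.exp (-‖a‖ ^ 2)} = ∅ := by
        ext x
        simp only [Set.mem_ofPred_eq, Set.mem_empty_iff_false, iff_false, not_lt]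
        apply le_trans _ (not_lt.1 h1)
        rw [Real.exp_le_one_iff]
        nlinarith [sq_nonneg ‖x‖]
      rw [this]; simp
  · exact ((measure_mono Set.inter_subset_right).trans_lt measure_ball_lt_top).ne

lemma gauss_total : ∫⁻ x : V n, gw x ≠ 0 ∧ ∫⁻ x : V n, gw x ≠ ⊤ := by
  have h := GaussianFourier.integral_rexp_neg_mul_sq_norm (V := V n) one_pos
  have hpos : 0 < ∫ v : V n, Real.exp (-1 * ‖v‖ ^ 2) := by
    rw [h]; positivity
  have hi : Integrable (fun v : V n => Real.exp (-1 * ‖v‖ ^ 2)) := by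
    by_contra hc
    rw [integral_undef hc] at hpos
    exact lt_irrefl _ hpos
  have e : ∫⁻ x : V n, gw x = ENNReal.ofReal (∫ v : V n, Real.exp (-1 * ‖v‖ ^ 2)) := by
    rw [ofReal_integral_eq_lintegral_ofReal hi (Eventually.of_forall fun x => (Real.exp_pos _).le)]
    simp only [gw, neg_mul, one_mul]
  rw [e]
  exact ⟨by simpa using hpos, ENNReal.ofReal_ne_top⟩

lemma gauss_prod (W : Submodule ℝ (V n)) {A B : Set (V n)} (hA : MeasurableSet A)
    (hB : MeasurableSet B) (iA : ∀ x, ∀ y ∈ Wᗮ, (x + y ∈ A ↔ x ∈ A))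
    (iB : ∀ x, ∀ y ∈ W, (y + x ∈ B ↔ x ∈ B)) :
    ∫⁻ x in A ∩ B, gw x = (∫⁻ a : W, A.indicator gw (a : V n)) *
      ∫⁻ b : Wᗮ, B.indicator gw (b : V n) := by
  have mp : MeasurePreserving (fun p : W × Wᗮ => ((p.1 : V n) + (p.2 : V n))) volume volume := by
    have h1 := (WithLp.volume_preserving_toLp (U := W) (V := Wᗮ))
    have h2 := W.orthogonalDecomposition.symm.measurePreserving
    have := h2.comp h1
    convert! this using 1
  rw [← lintegral_indicator (hA.inter hB), ← mp.lintegral_comp (gw_meas.indicator (hA.inter hB)),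
    Measure.volume_eq_prod, ← lintegral_prod_mul]
  · apply lintegral_congr
    rintro ⟨a, b⟩
    have e1 := iA a b b.2
    have e2 := iB b a a.2
    have e3 : gw ((a : V n) + (b : V n)) = gw (a : V n) * gw (b : V n) := by
      unfold gw
      rw [← ENNReal.ofReal_mul (Real.exp_pos _).le, ← Real.exp_add]
      have := norm_add_sq_eq_norm_sq_add_norm_sq_of_inner_eq_zero (a : V n) (b : V n)
        (W.inner_right_of_mem_orthogonal a.2 b.2)
      congr 2
      nlinarith
    by_cases ha : (a : V n) ∈ A
    · by_cases hb : (b : V n) ∈ B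
      · rw [Set.indicator_of_mem (show (a : V n) + (b : V n) ∈ A ∩ B from ⟨e1.2 ha, e2.2 hb⟩), Set.indicator_of_mem ha,
          Set.indicator_of_mem hb, e3]
      · rw [Set.indicator_of_notMem (fun h => hb (e2.1 h.2)), Set.indicator_of_notMem hb, mul_zero]
    · rw [Set.indicator_of_notMem (fun h => ha (e1.1 h.1)), Set.indicator_of_notMem ha, zero_mul]
  · exact ((gw_meas.indicator hA).comp measurable_subtype_coe).aemeasurable
  · exact ((gw_meas.indicator hB).comp measurable_subtype_coe).aemeasurable

/-- independence of orthogonal cones -/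
lemma gam_indep (W : Submodule ℝ (V n)) {A B : Set (V n)} (hA : MeasurableSet A)
    (hB : MeasurableSet B) (iA : ∀ x, ∀ y ∈ Wᗮ, (x + y ∈ A ↔ x ∈ A))
    (iB : ∀ x, ∀ y ∈ W, (y + x ∈ B ↔ x ∈ B))
    (cA : ∀ x ∈ A, ∀ r : ℝ, 0 < r → r • x ∈ A) (cB : ∀ x ∈ B, ∀ r : ℝ, 0 < r → r • x ∈ B) :
    gam (A ∩ B) = gam A * gam B := by
  obtain ⟨c, hc⟩ := gauss_cone (n := n)
  have g1 := gauss_prod W hA hB iA iB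
  have g2 := gauss_prod W hA MeasurableSet.univ iA (fun _ _ _ => by simp)
  have g3 := gauss_prod W MeasurableSet.univ hB (fun _ _ _ => by simp) iB
  have g4 := gauss_prod W MeasurableSet.univ MeasurableSet.univ (fun _ _ _ => by simp)
    (fun _ _ _ => by simp)
  rw [hc _ (hA.inter hB) (fun x hx r hr => ⟨cA x hx.1 r hr, cB x hx.2 r hr⟩)] at g1
  rw [Set.inter_univ, hc A hA cA] at g2
  rw [Set.univ_inter, hc B hB cB] at g3
  rw [Set.inter_univ] at g4
  have h0 := hc Set.univ MeasurableSet.univ (fun _ _ _ _ => trivial)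
  obtain ⟨t1, t2⟩ := gauss_total (n := n)
  have hcc := g4
  rw [h0] at g4
  rw [Measure.restrict_univ] at h0
  rw [h0, Set.univ_inter] at t1 t2
  have c0 : c ≠ 0 := left_ne_zero_of_mul t1
  have ct : c ≠ ⊤ := by
    intro h
    rw [h, ENNReal.top_mul ball_ne_zero] at t2
    exact t2 rfl
  rw [Set.univ_inter] at g4
  have main : (c * volume (A ∩ B ∩ Metric.ball 0 1)) * (c * volume (Metric.ball (0 : V n) 1)) =
      (c * volume (A ∩ Metric.ball 0 1)) * (c * volume (B ∩ Metric.ball 0 1)) := by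
    rw [g1, g2, g3, g4]; ring
  have main := congrArg ENNReal.toReal main
  simp only [ENNReal.toReal_mul] at main
  have c1 : c.toReal ≠ 0 := ENNReal.toReal_ne_zero.2 ⟨c0, ct⟩
  have hb : (volume (Metric.ball (0 : V n) 1)).toReal ≠ 0 :=
    ENNReal.toReal_ne_zero.2 ⟨ball_ne_zero, ball_ne_top⟩
  rw [gam_eq, gam_eq, gam_eq, div_mul_div_comm, div_eq_div_iff hb (mul_ne_zero hb hb)]
  have : c.toReal ^ 2 ≠ 0 := pow_ne_zero _ c1
  apply mul_left_cancel₀ this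
  linear_combination (volume (Metric.ball (0 : V n) 1)).toReal * main

/-- invariance under linear isometries -/
lemma gam_isom (f : V n ≃ₗᵢ[ℝ] V n) {A : Set (V n)} (hA : MeasurableSet A) :
    gam (f ⁻¹' A) = gam A := by
  rw [gam_eq, gam_eq]
  congr 2
  have : f ⁻¹' (A ∩ Metric.ball 0 1) = f ⁻¹' A ∩ Metric.ball 0 1 := by
    ext x; simp
  rw [← this]
  exact f.measurePreserving.measure_preimage (hA.inter measurableSet_ball).nullMeasurableSet

end Meas

section Generic

variable {n : ℕ} {𝒜 : Finset (AffForm n)}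

open Filter Topology

lemma pr_add (σ : Idx 𝒜 → SignType) (x y : V n) : pr σ (x + y) = pr σ x + pr σ y :=
  map_add _ _ _

lemma pr_smul (σ : Idx 𝒜 → SignType) (r : ℝ) (x : V n) : pr σ (r • x) = r • pr σ x :=
  map_smul _ _ _

lemma pr_self {σ : Idx 𝒜 → SignType} {x : V n} (h : x ∈ dir σ) : pr σ x = x :=
  Submodule.starProjection_eq_self_iff.2 h

lemma pr_cont (σ : Idx 𝒜 → SignType) : Continuous (pr σ) :=
  ((dir σ).starProjection).continuous

lemma ae_submodule (s : Submodule ℝ (V n)) {x : V n} (hx : x ∉ s) :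
    ∀ᵐ z ∂(volume : Measure (V n)), z ∉ s := by
  have := Measure.addHaar_submodule (volume : Measure (V n)) s
    (fun h => hx (h ▸ Submodule.mem_top))
  rw [ae_iff]
  simpa using this

lemma ae_one (σ : Idx 𝒜 → SignType) (ℓ : Idx 𝒜) (h : ¬ dir σ ≤ LinearMap.ker ℓ.1.linear) :
    ∀ᵐ z ∂(volume : Measure (V n)), ℓ.1.linear (pr σ z) ≠ 0 := by
  obtain ⟨x, hx, hx2⟩ := SetLike.not_le_iff_exists.1 h
  have := ae_submodule (LinearMap.ker (ℓ.1.linear ∘ₗ (dir σ).starProjection.toLinearMap)) (x := x)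
    (by
      rw [LinearMap.mem_ker]
      rw [LinearMap.mem_ker] at hx2
      have e : (dir σ).starProjection x = x := pr_self hx
      simpa [e] using hx2)
  filter_upwards [this] with z hz
  exact hz

lemma ae_two (σ τ : Idx 𝒜 → SignType) (h : ¬ dir τ ≤ dir σ) :
    ∀ᵐ z ∂(volume : Measure (V n)), ∃ y ∈ dir τ, inner ℝ (z - pr σ z) y ≠ 0 := by
  obtain ⟨y, hy, hy2⟩ := SetLike.not_le_iff_exists.1 h
  have key : inner ℝ (y - pr σ y) y ≠ 0 := by
    have h1 := pr_inner σ y (pr_mem σ y)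
    intro h2
    have h3 : inner ℝ (y - pr σ y) (y - pr σ y) = 0 := by
      rw [inner_sub_right (y - pr σ y), h1, h2, sub_zero]
    rw [inner_self_eq_zero, sub_eq_zero] at h3
    exact hy2 (h3 ▸ pr_mem σ y)
  have := ae_submodule (LinearMap.ker ((innerₗ (V n) y) ∘ₗ
    (LinearMap.id - (dir σ).starProjection.toLinearMap))) (x := y)
    (by
      rw [LinearMap.mem_ker]
      intro h
      apply key
      rw [real_inner_comm]
      exact h)
  filter_upwards [this] with z hz
  refine ⟨y, hy, fun h => hz ?_⟩
  rw [LinearMap.mem_ker]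
  rw [real_inner_comm] at h
  exact h

lemma ae_gen (𝒜 : Finset (AffForm n)) : ∀ᵐ z ∂(volume : Measure (V n)), Gen 𝒜 z := by
  have h1 : ∀ᵐ z ∂(volume : Measure (V n)), ∀ (σ : Idx 𝒜 → SignType) (ℓ : Idx 𝒜),
      ¬ dir σ ≤ LinearMap.ker ℓ.1.linear → ℓ.1.linear (pr σ z) ≠ 0 := by
    rw [ae_all_iff]; intro σ
    rw [ae_all_iff]; intro ℓ
    by_cases h : dir σ ≤ LinearMap.ker ℓ.1.linear
    · exact Eventually.of_forall fun z hz => (hz h).elim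
    · filter_upwards [ae_one σ ℓ h] with z hz _ using hz
  have h2 : ∀ᵐ z ∂(volume : Measure (V n)), ∀ (σ τ : Idx 𝒜 → SignType), ¬ dir τ ≤ dir σ →
      ∃ y ∈ dir τ, inner ℝ (z - pr σ z) y ≠ 0 := by
    rw [ae_all_iff]; intro σ
    rw [ae_all_iff]; intro τ
    by_cases h : dir τ ≤ dir σ
    · exact Eventually.of_forall fun z hz => (hz h).elim
    · filter_upwards [ae_two σ τ h] with z hz _ using hz
  filter_upwards [h1, h2] with z a b
  exact ⟨a, b⟩

lemma meas_sign {f : V n → ℝ} (hf : Continuous f) (s : SignType) :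
    MeasurableSet {z | SignType.sign (f z) = s} := by
  cases s
  · have : {z | SignType.sign (f z) = SignType.zero} = {z | f z = 0} := by
      ext z; exact sign_eq_zero_iff
    rw [this]
    exact (isClosed_eq hf continuous_const).measurableSet
  · have : {z | SignType.sign (f z) = SignType.neg} = {z | f z < 0} := by
      ext z; exact sign_eq_neg_one_iff
    rw [this]
    exact (isOpen_lt hf continuous_const).measurableSet
  · have : {z | SignType.sign (f z) = SignType.pos} = {z | 0 < f z} := by
      ext z; exact sign_eq_one_iff
    rw [this]
    exact (isOpen_lt continuous_const hf).measurableSet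

lemma Nrm_closed (H D : Idx 𝒜 → SignType) : IsClosed {m : V n | Nrm H D m} := by
  have : {m : V n | Nrm H D m} = ⋂ f : V n, ⋂ h : V n, ⋂ (_ : sg 𝒜 f = D), ⋂ (_ : sg 𝒜 h = H),
      {m : V n | inner ℝ m (f - h) ≤ 0} := by
    ext m; simp [Nrm]
  rw [this]
  refine isClosed_iInter fun f => isClosed_iInter fun h => isClosed_iInter fun _ =>
    isClosed_iInter fun _ => isClosed_le (by fun_prop) continuous_const

lemma Nrm_smul {H D : Idx 𝒜 → SignType} {m : V n} (h : Nrm H D m) {r : ℝ} (hr : 0 ≤ r) :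
    Nrm H D (r • m) := by
  intro f k hf hk
  rw [real_inner_smul_left]
  exact mul_nonpos_of_nonneg_of_nonpos hr (h f k hf hk)

lemma Nrm_add {H D : Idx 𝒜 → SignType} {m m' : V n} (h : Nrm H D m) (h' : Nrm H D m') :
    Nrm H D (m + m') := by
  intro f k hf hk
  rw [inner_add_left]
  exact add_nonpos (h f k hf hk) (h' f k hf hk)

lemma meas_forall {ι : Type*} [Finite ι] {p : ι → V n → Prop} (h : ∀ i, MeasurableSet {z | p i z}) :
    MeasurableSet {z | ∀ i, p i z} := by
  have : {z | ∀ i, p i z} = ⋂ i, {z | p i z} := by ext; simp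
  rw [this]
  exact MeasurableSet.iInter h

lemma meas_imp {p : Prop} {q : V n → Prop} (h : MeasurableSet {z | q z}) :
    MeasurableSet {z | p → q z} := by
  by_cases hp : p
  · simpa [hp] using h
  · simp [hp]

lemma linpr_cont (H : Idx 𝒜 → SignType) (ℓ : AffForm n) :
    Continuous (fun z => ℓ.linear (pr H z)) := (lin_cont ℓ).comp (pr_cont H)

lemma meas_RecOK (H : Idx 𝒜 → SignType) : MeasurableSet {z : V n | RecOK H z} :=
  meas_forall fun ℓ => meas_imp (meas_sign (linpr_cont H ℓ.1) _)

lemma meas_Nrm (H D : Idx 𝒜 → SignType) : MeasurableSet {z : V n | Nrm H D (z - pr H z)} :=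
  ((Nrm_closed H D).preimage (continuous_id.sub (pr_cont H))).measurableSet

lemma meas_KK (H D : Idx 𝒜 → SignType) : MeasurableSet {z : V n | KK H D z} :=
  (meas_RecOK H).inter (meas_Nrm H D)

lemma meas_MM (F K C : Idx 𝒜 → SignType) : MeasurableSet {z : V n | MM F K C z} := by
  have h : MeasurableSet {z : V n | ∀ ℓ : Idx 𝒜, F ℓ = 0 →
      SignType.sign (ℓ.1.linear (pr K z)) = K ℓ} :=
    meas_forall fun ℓ => meas_imp (meas_sign (linpr_cont K ℓ.1) _)
  exact h.inter (meas_Nrm K C)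

/-- reflected version of `KK` -/
def KR (H D : Idx 𝒜 → SignType) (z : V n) : Prop := RecOK H z ∧ Nrm H D (-(z - pr H z))

lemma meas_KR (H D : Idx 𝒜 → SignType) : MeasurableSet {z : V n | KR H D z} :=
  (meas_RecOK H).inter
    ((Nrm_closed H D).preimage (continuous_id.sub (pr_cont H)).neg).measurableSet

lemma gam_KR (H D : Idx 𝒜 → SignType) : gam {z : V n | KR H D z} = gam {z : V n | KK H D z} := by
  rw [← gam_isom (dir H).reflection (meas_KK H D)]
  congr 1
  ext z
  have e1 : (dir H).reflection z = (2 : ℝ) • pr H z - z := by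
    rw [Submodule.reflection_apply, two_smul, two_smul]; rfl
  have e2 : pr H ((dir H).reflection z) = pr H z := by
    have : pr H z + pr H ((dir H).reflection z) = pr H z + pr H z := by
      rw [← pr_add, e1, ← two_smul ℝ (pr H z), show z + ((2:ℝ) • pr H z - z) = (2:ℝ) • pr H z by abel,
        pr_smul, pr_self (pr_mem H z)]
    exact add_left_cancel this
  have e3 : (dir H).reflection z - pr H ((dir H).reflection z) = -(z - pr H z) := by
    rw [e2, e1, two_smul]; abel
  show KR H D z ↔ KK H D ((dir H).reflection z)
  unfold KR KK RecOK
  rw [e3, e2]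

lemma pr_perp {σ : Idx 𝒜 → SignType} {y : V n} (h : y ∈ (dir σ)ᗮ) : pr σ y = 0 := by
  exact (Submodule.starProjection_apply_eq_zero_iff _).2 h

lemma fle.dir_le {G F : Idx 𝒜 → SignType} (h : fle G F) : dir G ≤ dir F :=
  dir_mono fun _ hℓ => h.zero hℓ

lemma gam_mul {G F K C : Idx 𝒜 → SignType} (hGF : fle G F) (hFK : fle F K) :
    gam {z : V n | KK G F z} * gam {z : V n | MM F K C z} =
      gam {z : V n | KR G F z ∧ MM F K C z} := by
  rw [← gam_KR]
  symm
  apply gam_indep (dir F) (meas_KR G F) (meas_MM F K C)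
  · intro x y hy
    have hyG : pr G y = 0 := pr_perp (Submodule.orthogonal_le hGF.dir_le hy)
    have e : pr G (x + y) = pr G x := by rw [pr_add, hyG, add_zero]
    show KR G F (x + y) ↔ KR G F x
    unfold KR RecOK
    rw [e]
    apply and_congr Iff.rfl
    unfold Nrm
    refine forall_congr' fun f => forall_congr' fun h => forall_congr' fun hf => forall_congr' fun hh => ?_
    have : inner ℝ y (f - h) = 0 := by
      rw [real_inner_comm]
      refine hy _ (sub_mem_dir (fun ℓ hℓ => ?_) (fun ℓ hℓ => ?_))
      · rw [hf, hℓ]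
      · rw [hh]; exact hGF.zero hℓ
    rw [show -(x + y - pr G x) = -(x - pr G x) - y by abel, inner_sub_left, this, sub_zero]
  · intro x y hy
    have e : pr K (y + x) = y + pr K x := by rw [pr_add, pr_self (hFK.dir_le hy)]
    show MM F K C (y + x) ↔ MM F K C x
    unfold MM
    rw [e]
    rw [show y + x - (y + pr K x) = x - pr K x by abel]
    apply and_congr _ Iff.rfl
    refine forall_congr' fun ℓ => forall_congr' fun hℓ => ?_
    rw [map_add, mem_dir.1 hy ℓ hℓ, zero_add]
  · rintro x ⟨h1, h2⟩ r hr
    refine ⟨fun ℓ hℓ => ?_, ?_⟩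
    · rw [pr_smul, map_smul, smul_eq_mul, sign_mul, sign_pos hr, one_mul]; exact h1 ℓ hℓ
    · have := Nrm_smul h2 hr.le
      rwa [smul_neg, smul_sub, ← pr_smul] at this
  · rintro x ⟨h1, h2⟩ r hr
    refine ⟨fun ℓ hℓ => ?_, ?_⟩
    · rw [pr_smul, map_smul, smul_eq_mul, sign_mul, sign_pos hr, one_mul]; exact h1 ℓ hℓ
    · have := Nrm_smul h2 hr.le
      rwa [smul_sub, ← pr_smul] at this

end Generic

section Geometry

variable {n : ℕ} {𝒜 : Finset (AffForm n)}

open Filter Topology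

lemma cl_iff {F : Face 𝒜} {x : V n} : x ∈ closure F.carrier ↔ fle (sg 𝒜 x) F.sgn := by
  constructor
  · intro hx ℓ
    have key : ∀ {U : Set ℝ}, IsClosed U → (∀ y ∈ F.carrier, ℓ.1 y ∈ U) → ℓ.1 x ∈ U := by
      intro U hU h
      have hc : IsClosed {y : V n | ℓ.1 y ∈ U} := hU.preimage (aff_cont ℓ.1)
      exact closure_minimal (t := {y : V n | ℓ.1 y ∈ U}) h hc hx
    have hs : ∀ y ∈ F.carrier, SignType.sign (ℓ.1 y) = F.sgn ℓ := fun y hy => hy ℓ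
    show SignType.sign (ℓ.1 x) = 0 ∨ SignType.sign (ℓ.1 x) = F.sgn ℓ
    rcases hF : F.sgn ℓ with _ | _ | _
    · have := key (U := {0}) isClosed_singleton fun y hy => by
        have := hs y hy
        rw [hF] at this
        exact sign_eq_zero_iff.1 this
      left
      rw [Set.mem_singleton_iff.1 this, sign_zero]
    · have := key (U := Set.Iic 0) isClosed_Iic fun y hy => by
        have := hs y hy
        rw [hF] at this
        exact (sign_eq_neg_one_iff.1 this).le
      rcases eq_or_lt_of_le (Set.mem_Iic.1 this) with h | h
      · left; rw [h, sign_zero]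
      · right; exact sign_neg h
    · have := key (U := Set.Ici 0) isClosed_Ici fun y hy => by
        have := hs y hy
        rw [hF] at this
        exact (sign_eq_one_iff.1 this).le
      rcases eq_or_lt_of_le (Set.mem_Ici.1 this) with h | h
      · left; rw [← h, sign_zero]
      · right; exact sign_pos h
  · intro h
    have hc : Tendsto (fun ε : ℝ => x + ε • (F.pt - x)) (𝓝[>] 0) (𝓝 x) := by
      have : Continuous (fun ε : ℝ => x + ε • (F.pt - x)) := by fun_prop
      have h := this.tendsto 0
      simp only [zero_smul, add_zero] at h
      exact h.mono_left nhdsWithin_le_nhds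
    refine mem_closure_of_tendsto hc ?_
    filter_upwards [germ 𝒜 x (F.pt - x)] with ε hε
    rw [Face.sg_eq]
    funext ℓ
    by_cases h0 : sg 𝒜 x ℓ = 0
    · rw [(hε ℓ).2 h0, aff_sub, aff_zero h0, sub_zero]
      exact congrFun F.sg_pt ℓ
    · rw [(hε ℓ).1 h0]; exact h.eq h0

lemma germ_dir {y w : V n} (hw : w ∈ dir (sg 𝒜 y)) :
    ∀ᶠ ε : ℝ in 𝓝[>] 0, sg 𝒜 (y + ε • w) = sg 𝒜 y := by
  filter_upwards [germ 𝒜 y w] with ε hε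
  funext ℓ
  by_cases h0 : sg 𝒜 y ℓ = 0
  · rw [(hε ℓ).2 h0, mem_dir.1 hw ℓ h0, sign_zero, h0]
  · exact (hε ℓ).1 h0

lemma exists_eps {p : ℝ → Prop} (h : ∀ᶠ ε : ℝ in 𝓝[>] 0, p ε) : ∃ ε : ℝ, 0 < ε ∧ p ε := by
  obtain ⟨ε, h1, h2⟩ := (h.and self_mem_nhdsWithin).exists
  exact ⟨ε, h2, h1⟩

lemma vspan_eq {Q : Set (V n)} {y : V n} (h1 : ∀ x, sg 𝒜 x = sg 𝒜 y → x ∈ Q)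
    (h2 : ∀ x ∈ Q, ∀ ℓ : Idx 𝒜, sg 𝒜 y ℓ = 0 → sg 𝒜 x ℓ = 0) :
    vectorSpan ℝ Q = dir (sg 𝒜 y) := by
  apply le_antisymm
  · rw [vectorSpan_def, Submodule.span_le]
    rintro _ ⟨a, ha, b, hb, rfl⟩
    exact sub_mem_dir (h2 a ha) (h2 b hb)
  · intro w hw
    obtain ⟨ε, hε, h⟩ := exists_eps (germ_dir hw)
    have := vsub_mem_vectorSpan ℝ (h1 _ h) (h1 y rfl)
    rw [vsub_eq_sub, add_sub_cancel_left] at this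
    have := (vectorSpan ℝ Q).smul_mem ε⁻¹ this
    rwa [smul_smul, inv_mul_cancel₀ hε.ne', one_smul] at this

lemma dimS_eq {Q : Set (V n)} {y : V n} (h1 : ∀ x, sg 𝒜 x = sg 𝒜 y → x ∈ Q)
    (h2 : ∀ x ∈ Q, ∀ ℓ : Idx 𝒜, sg 𝒜 y ℓ = 0 → sg 𝒜 x ℓ = 0) :
    dimS Q = dm (sg 𝒜 y) := by
  rw [dimS, vspan_eq h1 h2, dm]

lemma dimS_carrier (F : Face 𝒜) : dimS F.carrier = dm F.sgn := by
  rw [← F.sg_pt]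
  refine dimS_eq (fun x hx => ?_) (fun x hx ℓ hℓ => ?_)
  · rw [Face.sg_eq, hx, F.sg_pt]
  · rw [Face.sg_eq] at hx
    rw [hx, ← F.sg_pt, hℓ]

lemma mem_relint {Q : Set (V n)} {y : V n} (h1 : ∀ x, sg 𝒜 x = sg 𝒜 y → x ∈ Q)
    (h2 : ∀ x ∈ Q, ∀ ℓ : Idx 𝒜, sg 𝒜 y ℓ = 0 → sg 𝒜 x ℓ = 0) :
    y ∈ intrinsicInterior ℝ Q := by
  rw [mem_intrinsicInterior]
  have hyA : y ∈ affineSpan ℝ Q := subset_affineSpan _ _ (h1 y rfl)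
  refine ⟨⟨y, hyA⟩, ?_, rfl⟩
  rw [mem_interior]
  refine ⟨{p | ∀ ℓ : Idx 𝒜, sg 𝒜 y ℓ ≠ 0 → 0 < ℓ.1 y * ℓ.1 (p : V n)}, ?_, ?_, ?_⟩
  · rintro ⟨p, hp⟩ h
    apply h1
    funext ℓ
    have hd : p - y ∈ dir (sg 𝒜 y) := by
      rw [← vspan_eq h1 h2, ← direction_affineSpan]
      exact AffineSubspace.vsub_mem_direction hp hyA
    by_cases h0 : sg 𝒜 y ℓ = 0
    · have := mem_dir.1 hd ℓ h0
      rw [aff_sub, aff_zero h0, sub_zero] at this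
      rw [h0]; show SignType.sign (ℓ.1 p) = 0
      rw [this, sign_zero]
    · have := h ℓ h0
      simp only at this
      show SignType.sign (ℓ.1 p) = SignType.sign (ℓ.1 y)
      rcases pos_and_pos_or_neg_and_neg_of_mul_pos this with ⟨a, b⟩ | ⟨a, b⟩
      · rw [sign_pos a, sign_pos b]
      · rw [sign_neg a, sign_neg b]
  · have : {p : affineSpan ℝ Q | ∀ ℓ : Idx 𝒜, sg 𝒜 y ℓ ≠ 0 → 0 < ℓ.1 y * ℓ.1 (p : V n)} =
        ⋂ ℓ : Idx 𝒜, {p : affineSpan ℝ Q | sg 𝒜 y ℓ ≠ 0 → 0 < ℓ.1 y * ℓ.1 (p : V n)} := by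
      ext; simp
    rw [this]
    apply isOpen_iInter_of_finite
    intro ℓ
    by_cases h0 : sg 𝒜 y ℓ = 0
    · simp [h0]
    · simp only [h0, ne_eq, not_false_eq_true, forall_true_left]
      exact isOpen_lt continuous_const
        (continuous_const.mul ((aff_cont ℓ.1).comp continuous_subtype_val))
  · intro ℓ h0
    have : ℓ.1 y ≠ 0 := fun h => h0 (by show SignType.sign (ℓ.1 y) = 0; rw [h, sign_zero])
    exact mul_self_pos.2 this

lemma relint_extend {Q : Set (V n)} {x y : V n} (hy : y ∈ intrinsicInterior ℝ Q) (hx : x ∈ Q) :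
    ∀ᶠ ε : ℝ in 𝓝[>] 0, y + ε • (y - x) ∈ Q := by
  rw [mem_intrinsicInterior] at hy
  obtain ⟨⟨y', hy'⟩, hi, rfl⟩ := hy
  simp only
  have hm : ∀ ε : ℝ, y' + ε • (y' - x) ∈ affineSpan ℝ Q := by
    intro ε
    have := AffineMap.lineMap_mem (-ε) hy' (subset_affineSpan ℝ _ hx)
    rw [AffineMap.lineMap_apply] at this
    convert this using 1
    simp only [vsub_eq_sub, vadd_eq_add]
    module
  let g : ℝ → affineSpan ℝ Q := fun ε => ⟨y' + ε • (y' - x), hm ε⟩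
  have hg : Continuous g := by
    apply Continuous.subtype_mk
    fun_prop
  have h0 : g 0 = ⟨y', hy'⟩ := by simp [g]
  have h := hg.tendsto 0
  rw [h0] at h
  have := h.eventually (mem_interior_iff_mem_nhds.1 hi)
  exact this.filter_mono nhdsWithin_le_nhds

lemma polyFace_relint {F : Face 𝒜} {Q : Set (V n)} (hQ : IsPolyFace (closure F.carrier) Q) {y : V n}
    (hy : y ∈ intrinsicInterior ℝ Q) : fle (sg 𝒜 y) F.sgn ∧ dimS Q = dm (sg 𝒜 y) := by
  have hQP : Q ⊆ closure F.carrier := by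
    rcases hQ with rfl | ⟨_, φ, _, rfl⟩
    · exact subset_rfl
    · exact fun x hx => hx.1
  have hyQ : y ∈ Q := intrinsicInterior_subset hy
  have hyF := cl_iff.1 (hQP hyQ)
  refine ⟨hyF, dimS_eq (fun x hx => ?_) (fun x hx ℓ hℓ => ?_)⟩
  · have hxP : x ∈ closure F.carrier := by rw [cl_iff, hx]; exact hyF
    rcases hQ with rfl | ⟨_, φ, hb, rfl⟩
    · exact hxP
    · refine ⟨hxP, le_antisymm (le_csSup hb ⟨x, hxP, rfl⟩) ?_⟩
      have hd : y - x ∈ dir (sg 𝒜 y) := sub_mem_dir (fun _ h => h) (fun ℓ h => by rw [hx, h])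
      obtain ⟨ε, hε, h⟩ := exists_eps (germ_dir hd)
      have h3 : y + ε • (y - x) ∈ closure F.carrier := by rw [cl_iff, h]; exact hyF
      have h4 := le_csSup hb ⟨_, h3, rfl⟩
      rw [map_add, map_smul, map_sub, smul_eq_mul, ← hyQ.2] at h4
      rw [← hyQ.2]
      by_contra hc
      push Not at hc
      have := mul_pos hε (sub_pos.2 hc)
      linarith
  · obtain ⟨ε, hε, h⟩ := exists_eps (relint_extend hy hx)
    have h1 := cl_iff.1 (hQP hx) ℓ
    have h2 := cl_iff.1 (hQP h) ℓ
    have e : sg 𝒜 (y + ε • (y - x)) ℓ = - sg 𝒜 x ℓ := by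
      show SignType.sign (ℓ.1 _) = - SignType.sign (ℓ.1 x)
      rw [aff_add_smul, aff_sub, aff_zero hℓ, zero_sub, zero_add, sign_mul, sign_pos hε, one_mul,
        Left.sign_neg]
    rw [e] at h2
    revert h1 h2
    generalize sg 𝒜 x ℓ = a
    generalize F.sgn ℓ = b
    revert a b
    decide

lemma exists_polyFace {F : Face 𝒜} {y : V n} (hy : fle (sg 𝒜 y) F.sgn) :
    ∃ Q, IsPolyFace (closure F.carrier) Q ∧ dimS Q = dm (sg 𝒜 y) ∧ y ∈ intrinsicInterior ℝ Q := by
  classical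
  let Q : Set (V n) := {x ∈ closure F.carrier | ∀ ℓ : Idx 𝒜, sg 𝒜 y ℓ = 0 → sg 𝒜 x ℓ = 0}
  have h1 : ∀ x, sg 𝒜 x = sg 𝒜 y → x ∈ Q := by
    intro x hx
    refine ⟨?_, fun ℓ hℓ => by rw [hx, hℓ]⟩
    rw [cl_iff, hx]; exact hy
  have h2 : ∀ x ∈ Q, ∀ ℓ : Idx 𝒜, sg 𝒜 y ℓ = 0 → sg 𝒜 x ℓ = 0 := fun x hx => hx.2
  refine ⟨Q, Or.inr ⟨⟨y, h1 y rfl⟩, ?_⟩, dimS_eq h1 h2, mem_relint h1 h2⟩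
  let φ : V n →ₗ[ℝ] ℝ := -∑ ℓ : Idx 𝒜 with sg 𝒜 y ℓ = 0, ((F.sgn ℓ : SignType) : ℝ) • ℓ.1.linear
  have hφ : ∀ x ∈ closure F.carrier, φ x = φ y - ∑ ℓ : Idx 𝒜 with sg 𝒜 y ℓ = 0, |ℓ.1 x| := by
    intro x hx
    have : φ (x - y) = - ∑ ℓ : Idx 𝒜 with sg 𝒜 y ℓ = 0, |ℓ.1 x| := by
      simp only [φ, LinearMap.neg_apply, LinearMap.sum_apply, LinearMap.smul_apply, smul_eq_mul]
      congr 1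
      refine Finset.sum_congr rfl fun ℓ hℓ => ?_
      rw [aff_sub, aff_zero (Finset.mem_filter.1 hℓ).2, sub_zero]
      rcases cl_iff.1 hx ℓ with h | h
      · rw [aff_zero h]; simp
      · rw [← h]; exact sign_mul_self _
    rw [map_sub] at this
    linarith
  have hyP : y ∈ closure F.carrier := cl_iff.2 hy
  have hle : ∀ x ∈ closure F.carrier, φ x ≤ φ y := by
    intro x hx
    rw [hφ x hx]
    have : 0 ≤ ∑ ℓ : Idx 𝒜 with sg 𝒜 y ℓ = 0, |ℓ.1 x| := Finset.sum_nonneg fun _ _ => abs_nonneg _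
    linarith
  have hg : IsGreatest (φ '' closure F.carrier) (φ y) :=
    ⟨⟨y, hyP, rfl⟩, by rintro _ ⟨x, hx, rfl⟩; exact hle x hx⟩
  refine ⟨φ, ⟨φ y, hg.2⟩, ?_⟩
  rw [hg.csSup_eq]
  ext x
  constructor
  · rintro ⟨hx, hx2⟩
    refine ⟨hx, ?_⟩
    rw [hφ x hx, Finset.sum_eq_zero, sub_zero]
    intro ℓ hℓ
    rw [aff_zero (hx2 ℓ (Finset.mem_filter.1 hℓ).2), abs_zero]
  · rintro ⟨hx, hx2⟩
    refine ⟨hx, fun ℓ hℓ => ?_⟩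
    rw [hφ x hx] at hx2
    have h0 : ∑ ℓ : Idx 𝒜 with sg 𝒜 y ℓ = 0, |ℓ.1 x| = 0 := by linarith
    rw [Finset.sum_eq_zero_iff_of_nonneg fun _ _ => abs_nonneg _] at h0
    have := abs_eq_zero.1 (h0 ℓ (Finset.mem_filter.2 ⟨Finset.mem_univ _, hℓ⟩))
    show SignType.sign (ℓ.1 x) = 0
    rw [this, sign_zero]

lemma cl_convex (F : Face 𝒜) : Convex ℝ (closure F.carrier) := by
  apply Convex.closure
  intro x hx y hy a b ha hb hab
  rw [Face.sg_eq] at *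
  funext ℓ
  exact convex_part (P := fun _ => True) (τ := F.sgn) (fun ℓ _ => by rw [hx]) (fun ℓ _ => by rw [hy])
    ha hb hab ℓ trivial

lemma near_inner {F : Face 𝒜} {x y : V n} : y ∈ nearestPts (closure F.carrier) x ↔
    y ∈ closure F.carrier ∧ ∀ z ∈ closure F.carrier, inner ℝ (x - y) (z - y) ≤ 0 := by
  unfold nearestPts
  refine and_congr_right fun hy => ?_
  rw [← norm_eq_iInf_iff_real_inner_le_zero (cl_convex F) hy]
  have : Nonempty (closure F.carrier) := ⟨⟨y, hy⟩⟩
  have hb : BddBelow (Set.range fun w : closure F.carrier => ‖x - w‖) :=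
    ⟨0, by rintro _ ⟨w, rfl⟩; exact norm_nonneg _⟩
  simp only [dist_eq_norm]
  constructor
  · intro h
    exact le_antisymm (le_ciInf fun w => h w w.2) (ciInf_le hb ⟨y, hy⟩)
  · intro h z hz
    rw [h]
    exact ciInf_le hb ⟨z, hz⟩

lemma near_exists (F : Face 𝒜) (x : V n) : ∃ y, y ∈ nearestPts (closure F.carrier) x := by
  obtain ⟨y, hy, h⟩ := exists_norm_eq_iInf_of_complete_convex
    (K := closure F.carrier) ⟨F.pt, subset_closure F.pt_mem⟩ isClosed_closure.isComplete
    (cl_convex F) x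
  exact ⟨y, near_inner.2 ⟨hy, (norm_eq_iInf_iff_real_inner_le_zero (cl_convex F) hy).1 h⟩⟩

lemma near_unique {F : Face 𝒜} {x y y' : V n} (h : y ∈ nearestPts (closure F.carrier) x)
    (h' : y' ∈ nearestPts (closure F.carrier) x) : y = y' := by
  rw [near_inner] at h h'
  have h1 := h.2 y' h'.1
  have h2 := h'.2 y h.1
  have h3 : inner ℝ (y - y') (y - y') = inner ℝ (x - y) (y' - y) + inner ℝ (x - y') (y - y') := by
    rw [show y' - y = -(y - y') by abel, inner_neg_right, ← sub_eq_neg_add, ← inner_sub_left]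
    congr 1
    abel
  have h4 : inner ℝ (y - y') (y - y') ≤ 0 := by rw [h3]; linarith
  have h5 := le_antisymm h4 real_inner_self_nonneg
  exact sub_eq_zero.1 (inner_self_eq_zero.1 h5)

lemma Nrm_cl {F : Face 𝒜} {H : Idx 𝒜 → SignType} {m : V n} (h : Nrm H F.sgn m) {f k : V n}
    (hf : f ∈ closure F.carrier) (hk : sg 𝒜 k = H) : inner ℝ m (f - k) ≤ 0 := by
  have hc : IsClosed {f : V n | inner ℝ m (f - k) ≤ 0} :=
    isClosed_le (by fun_prop) continuous_const
  exact closure_minimal (t := {f : V n | inner ℝ m (f - k) ≤ 0})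
    (fun g hg => h g k (Face.sg_eq.1 hg) hk) hc hf

lemma Nrm_perp {F : Face 𝒜} {y m : V n} (hHF : fle (sg 𝒜 y) F.sgn) (h : Nrm (sg 𝒜 y) F.sgn m)
    {w : V n} (hw : w ∈ dir (sg 𝒜 y)) : inner ℝ m w = 0 := by
  have key : ∀ w ∈ dir (sg 𝒜 y), 0 ≤ inner ℝ m w := by
    intro w hw
    obtain ⟨ε, hε, h3⟩ := exists_eps (germ_dir hw)
    have := Nrm_cl h (cl_iff.2 hHF) h3
    rw [show y - (y + ε • w) = -(ε • w) by abel, inner_neg_right, inner_smul_right] at this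
    by_contra hc
    push Not at hc
    nlinarith [mul_pos hε (neg_pos.2 hc)]
  have h1 := key w hw
  have h2 := key (-w) (neg_mem hw)
  rw [inner_neg_right] at h2
  linarith

lemma near_iff {F : Face 𝒜} {x y : V n} : y ∈ nearestPts (closure F.carrier) x ↔
    fle (sg 𝒜 y) F.sgn ∧ Nrm (sg 𝒜 y) F.sgn (x - y) := by
  rw [near_inner, cl_iff]
  refine and_congr_right fun hy => ?_
  constructor
  · intro h f k hf hk
    have h1 := h f (subset_closure (Face.sg_eq.2 hf))
    have hd : y - k ∈ dir (sg 𝒜 y) := sub_mem_dir (fun _ h => h) (fun ℓ h => by rw [hk, h])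
    obtain ⟨ε, hε, h3⟩ := exists_eps (germ_dir hd)
    have h4 := h (y + ε • (y - k)) (cl_iff.2 (h3 ▸ hy))
    rw [add_sub_cancel_left, inner_smul_right] at h4
    have h5 : inner ℝ (x - y) (y - k) ≤ 0 := by
      by_contra hc
      push Not at hc
      nlinarith [mul_pos hε hc]
    rw [show f - k = (f - y) + (y - k) by abel, inner_add_right]
    linarith
  · intro h z hz
    exact Nrm_cl h hz rfl

/-- orthogonal projection to the affine span of a face -/
def ys (H : Face 𝒜) (x : V n) : V n := H.pt + pr H.sgn (x - H.pt)

/-- region of points whose nearest point lies in `H` -/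
def SS (H F : Face 𝒜) (x : V n) : Prop :=
  sg 𝒜 (ys H x) = H.sgn ∧ Nrm H.sgn F.sgn (x - ys H x)

lemma SS_iff {H F : Face 𝒜} (hHF : fle H.sgn F.sgn) {x : V n} :
    SS H F x ↔ ∃ y ∈ nearestPts (closure F.carrier) x, sg 𝒜 y = H.sgn := by
  constructor
  · rintro ⟨h1, h2⟩
    refine ⟨ys H x, near_iff.2 ?_, h1⟩
    rw [h1]; exact ⟨hHF, h2⟩
  · rintro ⟨y, hy, hyH⟩
    have h := near_iff.1 hy
    have hd : y - H.pt ∈ dir H.sgn := sub_mem_dir (fun ℓ h => by rw [hyH, h])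
      (fun ℓ h => by rw [H.sg_pt, h])
    have hp : x - y ∈ (dir H.sgn)ᗮ := by
      rw [Submodule.mem_orthogonal']
      intro w hw
      rw [← hyH] at hw
      exact Nrm_perp h.1 h.2 hw
    have e : ys H x = y := by
      rw [ys, show x - H.pt = (x - y) + (y - H.pt) by abel, pr_add, pr_perp hp, pr_self hd]
      abel
    unfold SS
    rw [e]
    rw [hyH] at h
    exact ⟨hyH, h.2⟩

lemma projSet_iff {F : Face 𝒜} {k : ℕ} {x : V n} : x ∈ projSet (closure F.carrier) k ↔
    ∃ H : Face 𝒜, (fle H.sgn F.sgn ∧ dm H.sgn = k) ∧ SS H F x := by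
  constructor
  · rintro ⟨y, hy, Q, hQ, rfl, hyQ⟩
    obtain ⟨h1, h2⟩ := polyFace_relint hQ hyQ
    exact ⟨faceOf 𝒜 y, ⟨h1, h2.symm⟩, (SS_iff h1).2 ⟨y, hy, rfl⟩⟩
  · rintro ⟨H, ⟨h1, rfl⟩, h⟩
    obtain ⟨y, hy, hyH⟩ := (SS_iff h1).1 h
    rw [← hyH] at h1
    obtain ⟨Q, hQ, hd, hyQ⟩ := exists_polyFace h1
    exact ⟨y, hy, Q, hQ, by rw [hd, hyH], hyQ⟩

lemma SS_exists (F : Face 𝒜) (x : V n) : ∃ H : Face 𝒜, fle H.sgn F.sgn ∧ SS H F x := by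
  obtain ⟨y, hy⟩ := near_exists F x
  have h := near_iff.1 hy
  exact ⟨faceOf 𝒜 y, h.1, (SS_iff h.1).2 ⟨y, hy, rfl⟩⟩

lemma SS_unique {F H H' : Face 𝒜} {x : V n} (h1 : fle H.sgn F.sgn) (h : SS H F x)
    (h1' : fle H'.sgn F.sgn) (h' : SS H' F x) : H = H' := by
  obtain ⟨y, hy, e⟩ := (SS_iff h1).1 h
  obtain ⟨y', hy', e'⟩ := (SS_iff h1').1 h'
  have := near_unique hy hy'
  subst this
  exact Face.ext (e.symm.trans e')

end Geometry

section Asymp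

variable {n : ℕ} {𝒜 : Finset (AffForm n)}

open Filter Topology

/-- foot point of the span of a face -/
def ft (H : Face 𝒜) : V n := H.pt - pr H.sgn H.pt

lemma pr_ft (H : Face 𝒜) : pr H.sgn (ft H) = 0 := by
  have := pr_add H.sgn (ft H) (pr H.sgn H.pt)
  rw [ft, sub_add_cancel, pr_self (pr_mem _ _)] at this
  have h := right_eq_add.1 this
  exact h

lemma ys_eq (H : Face 𝒜) (x : V n) : ys H x = ft H + pr H.sgn x := by
  have := pr_add H.sgn (x - H.pt) H.pt
  rw [sub_add_cancel] at this
  rw [ys, ft, this]; abel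

lemma ys_cont (H : Face 𝒜) : Continuous (ys H) := by
  have : ys H = fun x => ft H + pr H.sgn x := funext (ys_eq H)
  rw [this]
  exact continuous_const.add (pr_cont _)

lemma meas_SS (H F : Face 𝒜) : MeasurableSet {x | SS H F x} := by
  have h1 : MeasurableSet {x | sg 𝒜 (ys H x) = H.sgn} := by
    have : {x | sg 𝒜 (ys H x) = H.sgn} = {x | ∀ ℓ : Idx 𝒜, SignType.sign (ℓ.1 (ys H x)) = H.sgn ℓ} := by
      ext x; exact funext_iff
    rw [this]
    exact meas_forall fun ℓ => meas_sign ((aff_cont ℓ.1).comp (ys_cont H)) _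
  have h2 : MeasurableSet {x | Nrm H.sgn F.sgn (x - ys H x)} :=
    ((Nrm_closed _ _).preimage (continuous_id.sub (ys_cont H))).measurableSet
  exact h1.inter h2

lemma ev_sign (H : Face 𝒜) {z : V n} (hz : Gen 𝒜 z) :
    ∀ᶠ R : ℝ in atTop, sg 𝒜 (ys H (R • z)) = H.sgn ↔ RecOK H.sgn z := by
  filter_upwards [germ_top 𝒜 (ft H) (pr H.sgn z)] with R hR
  have e : ys H (R • z) = ft H + R • pr H.sgn z := by rw [ys_eq, pr_smul]
  rw [e]
  have key : ∀ ℓ : Idx 𝒜, dir H.sgn ≤ LinearMap.ker ℓ.1.linear →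
      sg 𝒜 (ft H + R • pr H.sgn z) ℓ = H.sgn ℓ := by
    intro ℓ h
    rw [(hR ℓ).1 (h (pr_mem _ _)), ← H.sg_pt]
    show SignType.sign (ℓ.1 _) = SignType.sign (ℓ.1 _)
    congr 1
    have h1 := aff_add ℓ.1 (ft H) (pr H.sgn H.pt)
    rw [LinearMap.mem_ker.1 (h (pr_mem _ _)), add_zero, ft, sub_add_cancel] at h1
    rw [ft, h1]
  constructor
  · intro h ℓ hℓ
    rw [← (hR ℓ).2 (hz.one _ ℓ hℓ), h]
  · intro h
    funext ℓ
    by_cases hℓ : dir H.sgn ≤ LinearMap.ker ℓ.1.linear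
    · exact key ℓ hℓ
    · rw [(hR ℓ).2 (hz.one _ ℓ hℓ)]; exact h ℓ hℓ

lemma TT_convex (H D : Idx 𝒜 → SignType) : Convex ℝ {z : V n | Nrm H D (z - pr H z)} := by
  intro x hx y hy a b ha hb _
  show Nrm H D _
  have := Nrm_add (Nrm_smul hx ha) (Nrm_smul hy hb)
  rw [pr_add, pr_smul, pr_smul]
  convert this using 1
  module

lemma ev_nrm (H F : Face 𝒜) : ∀ᵐ z ∂(volume : Measure (V n)), ∀ᶠ R : ℝ in atTop,
    Nrm H.sgn F.sgn (R • z - ys H (R • z)) ↔ Nrm H.sgn F.sgn (z - pr H.sgn z) := by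
  have h0 := (TT_convex H.sgn F.sgn).addHaar_frontier (volume : Measure (V n))
  set T : Set (V n) := {z : V n | Nrm H.sgn F.sgn (z - pr H.sgn z)} with hT
  have hcl : IsClosed T := (Nrm_closed _ _).preimage (continuous_id.sub (pr_cont H.sgn))
  have h1 : ∀ᵐ z ∂(volume : Measure (V n)), z ∉ frontier T := by
    rw [ae_iff]; simpa using h0
  filter_upwards [h1] with z hz
  have hlim : Tendsto (fun R : ℝ => z - R⁻¹ • ft H) atTop (𝓝 z) := by
    have : Tendsto (fun R : ℝ => z - R⁻¹ • ft H) atTop (𝓝 (z - (0 : ℝ) • ft H)) :=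
      tendsto_const_nhds.sub (tendsto_inv_atTop_zero.smul_const _)
    simpa using this
  have hev : ∀ᶠ R : ℝ in atTop, z - R⁻¹ • ft H ∈ T ↔ z ∈ T := by
    by_cases hzT : z ∈ T
    · have : z ∈ interior T := by
        by_contra hc
        exact hz ⟨subset_closure hzT, hc⟩
      filter_upwards [hlim.eventually (mem_interior_iff_mem_nhds.1 this)] with R hR
      exact ⟨fun _ => hzT, fun _ => hR⟩
    · filter_upwards [hlim.eventually (hcl.isOpen_compl.mem_nhds hzT)] with R hR
      exact ⟨fun h => (hR h).elim, fun h => (hzT h).elim⟩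
  filter_upwards [hev, eventually_gt_atTop 0] with R hR hR0
  have e : R • z - ys H (R • z) =
      R • ((z - R⁻¹ • ft H) - pr H.sgn (z - R⁻¹ • ft H)) := by
    have e1 : pr H.sgn (z - R⁻¹ • ft H) = pr H.sgn z := by
      rw [sub_eq_add_neg, ← neg_smul, pr_add, pr_smul, pr_ft, smul_zero, add_zero]
    rw [e1, ys_eq, pr_smul, smul_sub, smul_sub, smul_smul, mul_inv_cancel₀ hR0.ne', one_smul]
    abel
  rw [e]
  refine Iff.trans ?_ hR
  constructor
  · intro h
    have := Nrm_smul h (inv_nonneg.2 hR0.le)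
    rwa [smul_smul, inv_mul_cancel₀ hR0.ne', one_smul] at this
  · intro h
    exact Nrm_smul h hR0.le

lemma ev_SS (H F : Face 𝒜) : ∀ᵐ z ∂(volume : Measure (V n)), ∀ᶠ R : ℝ in atTop,
    SS H F (R • z) ↔ KK H.sgn F.sgn z := by
  filter_upwards [ev_nrm H F, ae_gen 𝒜] with z h1 h2
  filter_upwards [h1, ev_sign H h2] with R a b
  exact and_congr b a

lemma ev_SS_all (𝒜 : Finset (AffForm n)) : ∀ᵐ z ∂(volume : Measure (V n)), ∀ᶠ R : ℝ in atTop,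
    ∀ H F : Face 𝒜, SS H F (R • z) ↔ KK H.sgn F.sgn z := by
  have : ∀ᵐ z ∂(volume : Measure (V n)), ∀ H F : Face 𝒜, ∀ᶠ R : ℝ in atTop,
      SS H F (R • z) ↔ KK H.sgn F.sgn z := by
    rw [ae_all_iff]; intro H
    rw [ae_all_iff]; intro F
    exact ev_SS H F
  filter_upwards [this] with z hz
  rw [eventually_all]; intro H
  rw [eventually_all]; intro F
  exact hz H F

lemma KK_unique (F : Face 𝒜) : ∀ᵐ z ∂(volume : Measure (V n)),
    ∃ H : Face 𝒜, ∀ H' : Face 𝒜, (fle H'.sgn F.sgn ∧ KK H'.sgn F.sgn z) ↔ H' = H := by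
  filter_upwards [ev_SS_all 𝒜] with z hz
  obtain ⟨R, hR⟩ := hz.exists
  obtain ⟨H, h1, h2⟩ := SS_exists F (R • z)
  refine ⟨H, fun H' => ⟨?_, ?_⟩⟩
  · rintro ⟨h3, h4⟩
    exact SS_unique h3 ((hR H' F).2 h4) h1 h2
  · rintro rfl
    exact ⟨h1, (hR H' F).1 h2⟩

open Classical in
/-- the generic decomposition by normal cones, at the level of solid angles -/
lemma gam_KK_sum (F : Face 𝒜) (P : Face 𝒜 → Prop) :
    gam {z : V n | ∃ H : Face 𝒜, (fle H.sgn F.sgn ∧ P H) ∧ KK H.sgn F.sgn z} =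
      ∑ H : Face 𝒜 with fle H.sgn F.sgn ∧ P H, gam {z : V n | KK H.sgn F.sgn z} := by
  have hm : MeasurableSet {z : V n | ∃ H : Face 𝒜, (fle H.sgn F.sgn ∧ P H) ∧ KK H.sgn F.sgn z} := by
    have : {z : V n | ∃ H : Face 𝒜, (fle H.sgn F.sgn ∧ P H) ∧ KK H.sgn F.sgn z} =
        ⋃ H : Face 𝒜, ⋃ (_ : fle H.sgn F.sgn ∧ P H), {z | KK H.sgn F.sgn z} := by
      ext; simp
    rw [this]
    exact MeasurableSet.iUnion fun H => MeasurableSet.iUnion fun _ => meas_KK _ _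
  have := gam_rel (n := n) ({()} : Finset Unit) (fun _ => 1)
    (fun _ => {z : V n | ∃ H : Face 𝒜, (fle H.sgn F.sgn ∧ P H) ∧ KK H.sgn F.sgn z})
    (fun _ _ => hm) (Finset.univ.filter fun H : Face 𝒜 => fle H.sgn F.sgn ∧ P H) (fun _ => 1)
    (fun H => {z | KK H.sgn F.sgn z}) (fun H _ => meas_KK _ _) (by
      filter_upwards [KK_unique F] with z hz
      obtain ⟨H, hH⟩ := hz
      rw [Finset.sum_singleton]
      have hH1 := (hH H).2 rfl
      by_cases hP : P H
      · rw [if_pos (show ∃ H : Face 𝒜, (fle H.sgn F.sgn ∧ P H) ∧ KK H.sgn F.sgn z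
          from ⟨H, ⟨hH1.1, hP⟩, hH1.2⟩)]
        rw [Finset.sum_eq_single H]
        · rw [if_pos hH1.2]
        · intro H' h1 h2
          rw [if_neg]
          intro h3
          exact h2 ((hH H').1 ⟨(Finset.mem_filter.1 h1).2.1, h3⟩)
        · intro h
          exact (h (Finset.mem_filter.2 ⟨Finset.mem_univ _, hH1.1, hP⟩)).elim
      · rw [if_neg, Finset.sum_eq_zero]
        · intro H' h1
          rw [if_neg]
          intro h3
          have h1 := (Finset.mem_filter.1 h1).2
          exact hP ((hH H').1 ⟨h1.1, h3⟩ ▸ h1.2)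
        · rintro ⟨H', h1, h3⟩
          exact hP ((hH H').1 ⟨h1.1, h3⟩ ▸ h1.2))
  simpa using this

open Classical in
lemma gam_KK_total (F : Face 𝒜) :
    ∑ H : Face 𝒜 with fle H.sgn F.sgn, gam {z : V n | KK H.sgn F.sgn z} = 1 := by
  have h := gam_KK_sum F (fun _ => True)
  simp only [and_true] at h
  rw [← h]
  have : gam (Set.univ : Set (V n)) = 1 := by simp [gam]
  rw [← this]
  apply gam_congr
  filter_upwards [KK_unique F] with z hz
  obtain ⟨H, hH⟩ := hz
  exact ⟨fun _ => trivial, fun _ => ⟨H, (hH H).2 rfl⟩⟩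

open Classical in
lemma intrinsic_vol (F : Face 𝒜) (v : ℕ → ℝ) (hv : HasIntrinsicVolumes (closure F.carrier) v) (k : ℕ) :
    v k = ∑ H : Face 𝒜 with fle H.sgn F.sgn ∧ dm H.sgn = k, gam {z : V n | KK H.sgn F.sgn z} := by
  refine Eq.trans ?_ ((gam_KK_sum F (fun H => dm H.sgn = k)).trans
    (Finset.sum_congr (by ext; simp) fun _ _ => rfl))
  refine tendsto_nhds_unique (hv k) (gam_tendsto ?_ ?_ ?_)
  · have : projSet (closure F.carrier) k =
        ⋃ H : Face 𝒜, ⋃ (_ : fle H.sgn F.sgn ∧ dm H.sgn = k), {z | SS H F z} := by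
      ext; simp [projSet_iff]
    rw [this]
    exact MeasurableSet.iUnion fun H => MeasurableSet.iUnion fun _ => meas_SS _ _
  · have : {z : V n | ∃ H : Face 𝒜, (fle H.sgn F.sgn ∧ dm H.sgn = k) ∧ KK H.sgn F.sgn z} =
        ⋃ H : Face 𝒜, ⋃ (_ : fle H.sgn F.sgn ∧ dm H.sgn = k), {z | KK H.sgn F.sgn z} := by
      ext; simp
    rw [this]
    exact MeasurableSet.iUnion fun H => MeasurableSet.iUnion fun _ => meas_KK _ _
  · filter_upwards [ev_SS_all 𝒜] with z hz
    filter_upwards [hz] with R hR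
    rw [projSet_iff]
    exact exists_congr fun H => and_congr_right fun _ => hR H F

lemma le_dm (σ : Idx 𝒜 → SignType) : Module.finrank ℝ (dirL 𝒜) ≤ dm σ := by
  apply Submodule.finrank_mono
  intro x hx
  rw [mem_dir]
  intro ℓ _
  rw [dirL, Submodule.mem_iInf] at hx
  exact hx ℓ

lemma fle.dm_le {G F : Idx 𝒜 → SignType} (h : fle G F) : dm G ≤ dm F :=
  Submodule.finrank_mono h.dir_le

open Classical in
lemma nu_eq (v : Face 𝒜 → ℕ → ℝ)
    (hv : ∀ F : Face 𝒜, HasIntrinsicVolumes (closure (Face.carrier 𝒜 F)) (v F)) (t : ℝ) (F : Face 𝒜) :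
    intrinsicElt 𝒜 v t F = (-1 : ℝ) ^ dm F.sgn * ∑ H : Face 𝒜 with fle H.sgn F.sgn,
      (-1 : ℝ) ^ dm H.sgn * t ^ (dm H.sgn - Module.finrank ℝ (dirL 𝒜)) *
        gam {z : V n | KK H.sgn F.sgn z} := by
  unfold intrinsicElt
  rw [dimS_carrier]
  congr 1
  have : ∀ k ∈ Finset.Icc (Module.finrank ℝ (dirL 𝒜)) (dm F.sgn),
      (-1 : ℝ) ^ k * v F k * t ^ (k - Module.finrank ℝ (dirL 𝒜)) =
      ∑ H : Face 𝒜 with fle H.sgn F.sgn, if dm H.sgn = k then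
        (-1 : ℝ) ^ dm H.sgn * t ^ (dm H.sgn - Module.finrank ℝ (dirL 𝒜)) *
        gam {z : V n | KK H.sgn F.sgn z} else 0 := by
    intro k _
    rw [intrinsic_vol F (v F) (hv F) k, ← Finset.sum_filter, Finset.filter_filter, Finset.mul_sum,
      Finset.sum_mul]
    refine Finset.sum_congr rfl fun H hH => ?_
    rw [← (Finset.mem_filter.1 hH).2.2]
    ring
  rw [Finset.sum_congr rfl this, Finset.sum_comm]
  refine Finset.sum_congr rfl fun H hH => ?_
  rw [Finset.sum_ite_eq, if_pos]
  rw [Finset.mem_Icc]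
  exact ⟨le_dm _, (Finset.mem_filter.1 hH).2.dm_le⟩

end Asymp

section Mult

variable {n : ℕ} {𝒜 : Finset (AffForm n)}

open Filter Topology

lemma fle.antisymm {a b : Idx 𝒜 → SignType} (h1 : fle a b) (h2 : fle b a) : a = b := by
  funext ℓ
  rcases h1 ℓ with h | h
  · rcases h2 ℓ with h' | h'
    · rw [h, h']
    · exact h'.symm
  · exact h

lemma fle_of_comb {F D C : Idx 𝒜 → SignType} (h : combineSgn F D = C) : fle F C := by
  intro ℓ
  have := congrFun h ℓ
  unfold combineSgn at this
  by_cases h0 : F ℓ = 0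
  · exact Or.inl h0
  · rw [if_neg h0] at this; exact Or.inr this

/-- solid angle of the limit cone -/
def gK (H D : Face 𝒜) : ℝ := gam {z : V n | KK H.sgn D.sgn z}

/-- solid angle of the mixed cone -/
def gM (F K C : Face 𝒜) : ℝ := gam {z : V n | MM F.sgn K.sgn C.sgn z}

open Classical in
lemma step1 {F C : Face 𝒜} (hFC : fle F.sgn C.sgn) (w : ℕ → ℝ) :
    (∑ D : Face 𝒜, if combineSgn F.sgn D.sgn = C.sgn then
      (-1 : ℝ) ^ dm D.sgn * ∑ H : Face 𝒜 with fle H.sgn D.sgn, w (dm H.sgn) * gK H D else 0) =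
    ∑ K : Face 𝒜, if fle F.sgn K.sgn ∧ fle K.sgn C.sgn then
      (-1 : ℝ) ^ dm C.sgn * w (dm K.sgn) * gM F K C else 0 := by
  have key := gam_rel (n := n)
    (Finset.univ.filter fun p : Face 𝒜 × Face 𝒜 =>
      combineSgn F.sgn p.1.sgn = C.sgn ∧ fle p.2.sgn p.1.sgn)
    (fun p => (-1 : ℝ) ^ dm p.1.sgn * w (dm p.2.sgn))
    (fun p => {z : V n | KK p.2.sgn p.1.sgn z}) (fun _ _ => meas_KK _ _)
    (Finset.univ.filter fun K : Face 𝒜 => fle F.sgn K.sgn ∧ fle K.sgn C.sgn)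
    (fun K => (-1 : ℝ) ^ dm C.sgn * w (dm K.sgn))
    (fun K => {z : V n | MM F.sgn K.sgn C.sgn z}) (fun _ _ => meas_MM _ _ _) (by
      filter_upwards [ae_gen 𝒜] with z hz
      have := stepC1 F C hFC hz w
      rw [Finset.sum_filter, Finset.sum_filter, Fintype.sum_prod_type]
      refine Eq.trans ?_ (this.trans ?_)
      · refine Finset.sum_congr rfl fun D _ => Finset.sum_congr rfl fun H _ => ?_
        simp only [Set.mem_ofPred_eq]
        rw [← ite_and]
        simp only [and_assoc]
      · refine Finset.sum_congr rfl fun K _ => ?_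
        rw [← ite_and]
        simp only [and_assoc])
  rw [Finset.sum_filter, Finset.sum_filter, Fintype.sum_prod_type] at key
  refine Eq.trans ?_ key
  refine Finset.sum_congr rfl fun D _ => ?_
  by_cases h : combineSgn F.sgn D.sgn = C.sgn
  · rw [if_pos h, Finset.mul_sum, Finset.sum_filter]
    refine Finset.sum_congr rfl fun H _ => ?_
    simp only [h, true_and, gK, mul_assoc]
  · rw [if_neg h]
    symm
    apply Finset.sum_eq_zero
    intro H _
    rw [if_neg fun h' => h h'.1]

open Classical in
lemma step2 (G K C : Face 𝒜) :
    (∑ F : Face 𝒜, if fle G.sgn F.sgn ∧ fle F.sgn K.sgn then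
      (-1 : ℝ) ^ dm F.sgn * (gK G F * gM F K C) else 0) =
    if G = K then (-1 : ℝ) ^ dm G.sgn * gK G C else 0 := by
  by_cases hGK : fle G.sgn K.sgn
  swap
  · rw [if_neg (fun h => hGK (by rw [h]; exact fle.refl _))]
    apply Finset.sum_eq_zero
    intro F _
    rw [if_neg fun h => hGK (h.1.trans h.2)]
  have e1 : ∀ F ∈ (Finset.univ : Finset (Face 𝒜)), (if fle G.sgn F.sgn ∧ fle F.sgn K.sgn then
      (-1 : ℝ) ^ dm F.sgn * (gK G F * gM F K C) else 0) =
      if fle G.sgn F.sgn ∧ fle F.sgn K.sgn then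
      (-1 : ℝ) ^ dm F.sgn * gam {z : V n | KR G.sgn F.sgn z ∧ MM F.sgn K.sgn C.sgn z} else 0 := by
    intro F _
    by_cases h : fle G.sgn F.sgn ∧ fle F.sgn K.sgn
    · rw [if_pos h, if_pos h, ← gam_mul h.1 h.2]; rfl
    · rw [if_neg h, if_neg h]
  rw [Finset.sum_congr rfl e1]
  by_cases hne : G = K
  · subst hne
    rw [if_pos rfl, Finset.sum_eq_single G]
    · rw [if_pos ⟨fle.refl _, fle.refl _⟩]
      congr 2
      ext z
      have hd : ∀ f h : V n, sg 𝒜 f = G.sgn → sg 𝒜 h = G.sgn → f - h ∈ dir G.sgn := fun f h hf hh =>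
        sub_mem_dir (fun ℓ hℓ => by rw [hf, hℓ]) (fun ℓ hℓ => by rw [hh, hℓ])
      constructor
      · rintro ⟨h1, h2⟩
        exact ⟨h1.1, h2.2⟩
      · rintro ⟨h1, h2⟩
        refine ⟨⟨h1, fun f h hf hh => ?_⟩, fun ℓ hℓ => ?_, h2⟩
        · rw [inner_neg_left, pr_inner _ _ (hd f h hf hh), neg_zero]
        · rw [mem_dir.1 (pr_mem G.sgn z) ℓ hℓ, hℓ, sign_zero]
    · intro F _ hF
      rw [if_neg]
      rintro ⟨h1, h2⟩
      exact hF (Face.ext (h2.antisymm h1))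
    · intro h; exact (h (Finset.mem_univ _)).elim
  · rw [if_neg hne]
    have key := gam_rel (n := n)
      (Finset.univ.filter fun F : Face 𝒜 => fle G.sgn F.sgn ∧ fle F.sgn K.sgn)
      (fun F => (-1 : ℝ) ^ dm F.sgn)
      (fun F => {z : V n | KR G.sgn F.sgn z ∧ MM F.sgn K.sgn C.sgn z})
      (fun F _ => (meas_KR _ _).inter (meas_MM _ _ _))
      (∅ : Finset Unit) (fun _ => 0) (fun _ => ∅) (by simp) (by
        filter_upwards [ae_gen 𝒜] with z hz
        have := mcmullen G K hz hGK hne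
        rw [Finset.sum_filter, Finset.sum_empty]
        by_cases hA : RecOK G.sgn z ∧ Nrm K.sgn C.sgn (z - pr K.sgn z)
        · refine Eq.trans ?_ this
          refine Finset.sum_congr rfl fun F _ => ?_
          by_cases hF : fle G.sgn F.sgn ∧ fle F.sgn K.sgn
          · rw [if_pos hF]
            have e : (KR G.sgn F.sgn z ∧ MM F.sgn K.sgn C.sgn z) ↔
                (fle G.sgn F.sgn ∧ fle F.sgn K.sgn) ∧ Nrm G.sgn F.sgn (-(z - pr G.sgn z)) ∧
                (∀ ℓ : Idx 𝒜, F.sgn ℓ = 0 →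
                  SignType.sign (ℓ.1.linear (pr K.sgn z)) = K.sgn ℓ) := by
              unfold KR MM
              tauto
            by_cases hB : KR G.sgn F.sgn z ∧ MM F.sgn K.sgn C.sgn z
            · rw [if_pos hB, if_pos (e.1 hB)]
            · rw [if_neg hB, if_neg fun h => hB (e.2 h)]
          · rw [if_neg hF, if_neg fun h => hF h.1]
        · apply Finset.sum_eq_zero
          intro F _
          by_cases hF : fle G.sgn F.sgn ∧ fle F.sgn K.sgn
          · rw [if_pos hF, if_neg]
            rintro ⟨h1, h2⟩
            exact hA ⟨h1.1, h2.2⟩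
          · rw [if_neg hF])
    rw [Finset.sum_filter, Finset.sum_empty] at key
    exact key

open Classical in
lemma nu_mul (v : Face 𝒜 → ℕ → ℝ)
    (hv : ∀ F : Face 𝒜, HasIntrinsicVolumes (closure (Face.carrier 𝒜 F)) (v F)) (s t : ℝ) :
    mulT 𝒜 (intrinsicElt 𝒜 v s) (intrinsicElt 𝒜 v t) = intrinsicElt 𝒜 v (s * t) := by
  funext C
  rw [nu_eq v hv]
  set d := Module.finrank ℝ (dirL 𝒜) with hd
  unfold mulT
  let w : ℝ → ℕ → ℝ := fun t k => (-1 : ℝ) ^ k * t ^ (k - d)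
  have hw : ∀ t (F : Face 𝒜), intrinsicElt 𝒜 v t F = (-1 : ℝ) ^ dm F.sgn *
      ∑ H : Face 𝒜 with fle H.sgn F.sgn, w t (dm H.sgn) * gK H F := fun t F => nu_eq v hv t F
  have a1 : ∀ F : Face 𝒜, (∑ D : Face 𝒜, if combineSgn F.sgn D.sgn = C.sgn then
      intrinsicElt 𝒜 v s F * intrinsicElt 𝒜 v t D else 0) =
      ∑ K : Face 𝒜, ∑ G : Face 𝒜, if fle K.sgn C.sgn then
        (-1 : ℝ) ^ dm C.sgn * w s (dm G.sgn) * w t (dm K.sgn) *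
        (if fle G.sgn F.sgn ∧ fle F.sgn K.sgn then
          (-1 : ℝ) ^ dm F.sgn * (gK G F * gM F K C) else 0) else 0 := by
    intro F
    by_cases hFC : fle F.sgn C.sgn
    · have b1 : (∑ D : Face 𝒜, if combineSgn F.sgn D.sgn = C.sgn then
          intrinsicElt 𝒜 v s F * intrinsicElt 𝒜 v t D else 0) =
          intrinsicElt 𝒜 v s F * ∑ D : Face 𝒜, if combineSgn F.sgn D.sgn = C.sgn then
            intrinsicElt 𝒜 v t D else 0 := by
        rw [Finset.mul_sum]
        refine Finset.sum_congr rfl fun D _ => ?_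
        rw [mul_ite, mul_zero]
      rw [b1, hw s F]
      have b2 := step1 hFC (w t)
      simp only [hw t]
      rw [b2, Finset.mul_sum]
      refine Finset.sum_congr rfl fun K _ => ?_
      rw [Finset.mul_sum, Finset.sum_mul, Finset.sum_filter]
      refine Finset.sum_congr rfl fun G _ => ?_
      by_cases h1 : fle G.sgn F.sgn <;> by_cases h2 : fle F.sgn K.sgn <;>
        by_cases h3 : fle K.sgn C.sgn <;> simp [h1, h2, h3]
      ring
    · rw [Finset.sum_eq_zero fun D _ => if_neg fun h => hFC (fle_of_comb h)]
      symm
      refine Finset.sum_eq_zero fun K _ => Finset.sum_eq_zero fun G _ => ?_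
      by_cases h3 : fle K.sgn C.sgn
      · rw [if_pos h3, if_neg (fun h => hFC (h.2.trans h3)), mul_zero]
      · rw [if_neg h3]
  rw [Finset.sum_congr rfl fun F _ => a1 F, Finset.sum_comm]
  have a2 : ∀ K : Face 𝒜, (∑ F : Face 𝒜, ∑ G : Face 𝒜, if fle K.sgn C.sgn then
        (-1 : ℝ) ^ dm C.sgn * w s (dm G.sgn) * w t (dm K.sgn) *
        (if fle G.sgn F.sgn ∧ fle F.sgn K.sgn then
          (-1 : ℝ) ^ dm F.sgn * (gK G F * gM F K C) else 0) else 0) =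
      if fle K.sgn C.sgn then (-1 : ℝ) ^ dm C.sgn * (w s (dm K.sgn) * w t (dm K.sgn) *
        ((-1 : ℝ) ^ dm K.sgn * gK K C)) else 0 := by
    intro K
    by_cases h3 : fle K.sgn C.sgn
    · simp only [if_pos h3]
      rw [Finset.sum_comm]
      simp only [← Finset.mul_sum]
      simp only [step2]
      rw [Finset.sum_eq_single K]
      · rw [if_pos rfl]; ring
      · intro G _ h; rw [if_neg h, mul_zero]
      · intro h; exact (h (Finset.mem_univ _)).elim
    · simp [h3]
  rw [Finset.sum_congr rfl fun K _ => a2 K, ← Finset.sum_filter, Finset.mul_sum]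
  refine Finset.sum_congr rfl fun K _ => ?_
  congr 1
  show (-1 : ℝ) ^ dm K.sgn * s ^ (dm K.sgn - d) * ((-1 : ℝ) ^ dm K.sgn * t ^ (dm K.sgn - d)) *
    ((-1 : ℝ) ^ dm K.sgn * gK K C) = (-1 : ℝ) ^ dm K.sgn * (s * t) ^ (dm K.sgn - d) * gK K C
  rw [mul_pow]
  have : (-1 : ℝ) ^ dm K.sgn * (-1 : ℝ) ^ dm K.sgn = 1 := by
    rw [← mul_pow]; simp
  linear_combination ((-1 : ℝ) ^ dm K.sgn * s ^ (dm K.sgn - d) * t ^ (dm K.sgn - d) * gK K C) * this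

open Classical in
lemma nu_neg_one (v : Face 𝒜 → ℕ → ℝ)
    (hv : ∀ F : Face 𝒜, HasIntrinsicVolumes (closure (Face.carrier 𝒜 F)) (v F)) (F : Face 𝒜) :
    intrinsicElt 𝒜 v (-1) F = (-1 : ℝ) ^ (dm F.sgn - Module.finrank ℝ (dirL 𝒜)) := by
  rw [nu_eq v hv]
  set d := Module.finrank ℝ (dirL 𝒜) with hd
  have h1 : ∀ H ∈ Finset.univ.filter (fun H : Face 𝒜 => fle H.sgn F.sgn),
      (-1 : ℝ) ^ dm H.sgn * (-1 : ℝ) ^ (dm H.sgn - d) * gam {z : V n | KK H.sgn F.sgn z} =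
      (-1 : ℝ) ^ d * gam {z : V n | KK H.sgn F.sgn z} := by
    intro H _
    congr 1
    obtain ⟨k, hk⟩ := Nat.exists_eq_add_of_le (le_dm H.sgn)
    rw [hk, Nat.add_sub_cancel_left, pow_add, mul_assoc, ← mul_pow]
    simp [hd]
  rw [Finset.sum_congr rfl h1, ← Finset.mul_sum, gam_KK_total, mul_one]
  obtain ⟨k, hk⟩ := Nat.exists_eq_add_of_le (le_dm F.sgn)
  rw [hk, Nat.add_sub_cancel_left, pow_add, mul_comm, ← mul_assoc, ← mul_pow]
  simp [hd]

end Mult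

section UnitElt

variable {n : ℕ} {𝒜 : Finset (AffForm n)}

open Filter Topology

/-- recession directions of a face -/
def Rec (C : Idx 𝒜 → SignType) (w : V n) : Prop :=
  ∀ ℓ : Idx 𝒜, ℓ.1.linear w = 0 ∨ SignType.sign (ℓ.1.linear w) = C ℓ

lemma mem_dirL {w : V n} : w ∈ dirL 𝒜 ↔ ∀ ℓ : Idx 𝒜, ℓ.1.linear w = 0 := by
  rw [dirL, Submodule.mem_iInf]; rfl

open Classical in
lemma sum_D {F C : Face 𝒜} (hFC : fle F.sgn C.sgn) :
    (∑ D : Face 𝒜, if combineSgn F.sgn D.sgn = C.sgn then (-1 : ℝ) ^ dm D.sgn else 0) =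
      (-1 : ℝ) ^ dm C.sgn := by
  have h := euler (𝒜 := 𝒜) Set.univ isOpen_univ convex_univ
    (Finset.univ.filter fun ℓ : Idx 𝒜 => F.sgn ℓ ≠ 0) C.sgn
  rw [if_pos ⟨C.pt, trivial, fun ℓ _ => by rw [C.sg_pt]⟩] at h
  have e : dirOn 𝒜 (fun ℓ => ℓ ∉ (Finset.univ.filter fun ℓ : Idx 𝒜 => F.sgn ℓ ≠ 0) ∧ C.sgn ℓ = 0) =
      dir C.sgn := by
    ext x
    rw [mem_dirOn, mem_dir]
    refine forall_congr' fun ℓ => ?_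
    have := hFC.zero (ℓ := ℓ)
    simp
    tauto
  rw [e] at h
  refine Eq.trans ?_ h
  refine Finset.sum_congr rfl fun D _ => ?_
  refine if_congr ?_ rfl rfl
  constructor
  · intro hc
    refine ⟨fun ℓ hℓ => ?_, D.pt, trivial, D.sg_pt⟩
    have h0 : F.sgn ℓ = 0 := by simpa using hℓ
    rw [← hc, combineSgn, if_pos h0]
  · rintro ⟨hc, _⟩
    funext ℓ
    unfold combineSgn
    by_cases h0 : F.sgn ℓ = 0
    · rw [if_pos h0]; exact hc ℓ (by simpa using h0)
    · rw [if_neg h0]; exact hFC.eq h0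

open Classical in
lemma nu_one_chi (v : Face 𝒜 → ℕ → ℝ)
    (hv : ∀ F : Face 𝒜, HasIntrinsicVolumes (closure (Face.carrier 𝒜 F)) (v F)) (C : Face 𝒜) :
    intrinsicElt 𝒜 v 1 C = (-1 : ℝ) ^ dm C.sgn *
      ∑ F : Face 𝒜, if fle F.sgn C.sgn then (-1 : ℝ) ^ dm F.sgn else 0 := by
  have h := congrFun (nu_mul v hv (-1) (-1)) C
  rw [show (-1 : ℝ) * (-1) = 1 by norm_num] at h
  rw [← h, mulT, Finset.mul_sum]
  refine Finset.sum_congr rfl fun F _ => ?_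
  simp only [nu_neg_one v hv]
  set d := Module.finrank ℝ (dirL 𝒜) with hd
  have hp : ∀ F : Face 𝒜, (-1 : ℝ) ^ (dm F.sgn - d) = (-1 : ℝ) ^ d * (-1 : ℝ) ^ dm F.sgn := by
    intro F
    obtain ⟨k, hk⟩ := Nat.exists_eq_add_of_le (le_dm F.sgn)
    rw [hk, Nat.add_sub_cancel_left, pow_add, ← mul_assoc, ← mul_pow]
    simp [hd]
  have hdd : (-1 : ℝ) ^ d * (-1 : ℝ) ^ d = 1 := by rw [← mul_pow]; simp
  by_cases hFC : fle F.sgn C.sgn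
  · rw [if_pos hFC, ← sum_D hFC, Finset.sum_mul]
    refine Finset.sum_congr rfl fun D _ => ?_
    rw [ite_mul, zero_mul, hp F, hp D]
    refine if_congr Iff.rfl ?_ rfl
    linear_combination ((-1 : ℝ) ^ dm F.sgn * (-1 : ℝ) ^ dm D.sgn) * hdd
  · rw [if_neg hFC, mul_zero]
    exact Finset.sum_eq_zero fun D _ => if_neg fun h => hFC (fle_of_comb h)

open Classical in
lemma chi_zero (C : Face 𝒜) {w : V n} (hw : Rec C.sgn w) (hwL : w ∉ dirL 𝒜) :
    (∑ F : Face 𝒜, if fle F.sgn C.sgn then (-1 : ℝ) ^ dm F.sgn else 0) = 0 := by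
  rw [mem_dirL] at hwL
  push Not at hwL
  obtain ⟨i, hi⟩ := hwL
  have hiC : C.sgn i ≠ 0 := by
    rw [← (hw i).resolve_left hi]
    exact fun h => hi (sign_eq_zero_iff.1 h)
  set I : Finset (Idx 𝒜) := Finset.univ.filter fun ℓ => C.sgn ℓ ≠ 0 with hI
  have memI : ∀ ℓ, ℓ ∈ I ↔ C.sgn ℓ ≠ 0 := fun ℓ => by simp [hI]
  have h := incl_excl I C.sgn (fun ℓ hℓ => (memI ℓ).1 hℓ) (fun F => (-1 : ℝ) ^ dm F.sgn)
  let c : Finset (Idx 𝒜) → Prop := fun S => ∃ x : V n, (∀ ℓ : Idx 𝒜, C.sgn ℓ = 0 → sg 𝒜 x ℓ = 0) ∧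
    ∀ ℓ ∈ S, sg 𝒜 x ℓ = - C.sgn ℓ
  have h2 : ∀ S ∈ I.powerset, (∑ F : Face 𝒜, if (∀ ℓ ∉ I, F.sgn ℓ = C.sgn ℓ) ∧
      (∀ ℓ ∈ S, F.sgn ℓ = - C.sgn ℓ) then (-1 : ℝ) ^ dm F.sgn else 0) =
      if c S then (-1 : ℝ) ^ dm C.sgn else 0 := by
    intro S hS
    have hS := Finset.mem_powerset.1 hS
    let τ : Idx 𝒜 → SignType := fun ℓ => if ℓ ∈ S then - C.sgn ℓ else C.sgn ℓ
    have h3 := euler (𝒜 := 𝒜) Set.univ isOpen_univ convex_univ (I \ S) τ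
    have key : ∀ f : Idx 𝒜 → SignType, (∀ ℓ ∉ I \ S, f ℓ = τ ℓ) ↔
        ((∀ ℓ ∉ I, f ℓ = C.sgn ℓ) ∧ ∀ ℓ ∈ S, f ℓ = - C.sgn ℓ) := by
      intro f
      constructor
      · intro h
        refine ⟨fun ℓ hℓ => ?_, fun ℓ hℓ => ?_⟩
        · have := h ℓ (fun h' => hℓ (Finset.mem_sdiff.1 h').1)
          rw [this]
          exact if_neg fun h' => hℓ (hS h')
        · have := h ℓ (fun h' => (Finset.mem_sdiff.1 h').2 hℓ)
          rw [this]
          exact if_pos hℓ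
      · rintro ⟨a, b⟩ ℓ hℓ
        by_cases hs : ℓ ∈ S
        · rw [b ℓ hs]; exact (if_pos hs).symm
        · rw [a ℓ (fun h' => hℓ (Finset.mem_sdiff.2 ⟨h', hs⟩))]
          exact (if_neg hs).symm
    have e : dirOn 𝒜 (fun ℓ => ℓ ∉ I \ S ∧ τ ℓ = 0) = dir C.sgn := by
      ext x
      rw [mem_dirOn, mem_dir]
      refine forall_congr' fun ℓ => ?_
      have hτ : τ ℓ = 0 ↔ C.sgn ℓ = 0 := by
        simp only [τ]
        split_ifs
        · generalize C.sgn ℓ = a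
          revert a; decide
        · rfl
      rw [hτ, Finset.mem_sdiff, memI]
      tauto
    rw [e] at h3
    refine Eq.trans ?_ (h3.trans ?_)
    · refine Finset.sum_congr rfl fun F _ => if_congr ?_ rfl rfl
      rw [key]
      exact ⟨fun h => ⟨h, F.pt, trivial, F.sg_pt⟩, fun h => h.1⟩
    · refine if_congr ?_ rfl rfl
      constructor
      · rintro ⟨x, _, hx⟩
        rw [key] at hx
        exact ⟨x, fun ℓ hℓ => by rw [hx.1 ℓ (fun h => (memI ℓ).1 h hℓ), hℓ], hx.2⟩
      · rintro ⟨x, hx1, hx2⟩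
        refine ⟨x, trivial, (key _).2 ⟨fun ℓ hℓ => ?_, hx2⟩⟩
        have : C.sgn ℓ = 0 := by
          by_contra h; exact hℓ ((memI ℓ).2 h)
        rw [hx1 ℓ this, this]
  have h4 : ∀ S, c (insert i S) ↔ c S := by
    intro S
    constructor
    · rintro ⟨x, a, b⟩
      exact ⟨x, a, fun ℓ hℓ => b ℓ (Finset.mem_insert_of_mem hℓ)⟩
    · rintro ⟨x, a, b⟩
      obtain ⟨r, hr⟩ := (germ_top 𝒜 x (-w)).exists
      have e1 : ∀ ℓ : Idx 𝒜, ℓ.1.linear w = 0 → sg 𝒜 (x + r • -w) ℓ = sg 𝒜 x ℓ := fun ℓ hℓ =>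
        (hr ℓ).1 (by rw [map_neg, hℓ, neg_zero])
      have e2 : ∀ ℓ : Idx 𝒜, ℓ.1.linear w ≠ 0 → sg 𝒜 (x + r • -w) ℓ = - C.sgn ℓ := fun ℓ hℓ => by
        rw [(hr ℓ).2 (by rw [map_neg]; exact neg_ne_zero.2 hℓ), map_neg, Left.sign_neg,
          (hw ℓ).resolve_left hℓ]
      refine ⟨x + r • -w, fun ℓ hℓ => ?_, fun ℓ hℓ => ?_⟩
      · by_cases h0 : ℓ.1.linear w = 0
        · rw [e1 ℓ h0, a ℓ hℓ]
        · rw [e2 ℓ h0, hℓ]; rfl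
      · by_cases h0 : ℓ.1.linear w = 0
        · rcases Finset.mem_insert.1 hℓ with rfl | h'
          · exact (hi h0).elim
          · rw [e1 ℓ h0, b ℓ h']
        · exact e2 ℓ h0
  have h5 : (∑ F : Face 𝒜, if fle F.sgn C.sgn then (-1 : ℝ) ^ dm F.sgn else 0) =
      ∑ S ∈ I.powerset, (-1 : ℝ) ^ S.card * if c S then (-1 : ℝ) ^ dm C.sgn else 0 := by
    refine Eq.trans ?_ (h.trans ?_)
    · refine Finset.sum_congr rfl fun F _ => if_congr ?_ rfl rfl
      constructor
      · intro h
        refine ⟨fun ℓ hℓ => ?_, fun ℓ _ => h ℓ⟩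
        have : C.sgn ℓ = 0 := by
          by_contra h; exact hℓ ((memI ℓ).2 h)
        rw [h.zero this, this]
      · rintro ⟨a, b⟩ ℓ
        by_cases hℓ : ℓ ∈ I
        · exact b ℓ hℓ
        · exact Or.inr (a ℓ hℓ)
    · exact Finset.sum_congr rfl fun S hS => by rw [h2 S hS]
  rw [h5, ← Finset.insert_erase ((memI i).2 hiC), Finset.sum_powerset_insert (Finset.notMem_erase _ _),
    ← Finset.sum_add_distrib]
  apply Finset.sum_eq_zero
  intro S hS
  have hiS : i ∉ S := fun h => Finset.notMem_erase i I (Finset.mem_powerset.1 hS h)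
  rw [Finset.card_insert_of_notMem hiS, if_congr (h4 S) rfl rfl, pow_succ]
  ring

open Classical in
lemma nu_one_bdd (v : Face 𝒜 → ℕ → ℝ)
    (hv : ∀ F : Face 𝒜, HasIntrinsicVolumes (closure (Face.carrier 𝒜 F)) (v F)) (C : Face 𝒜)
    (hC : ∀ w, Rec C.sgn w → w ∈ dirL 𝒜) :
    intrinsicElt 𝒜 v 1 C = (-1 : ℝ) ^ (dm C.sgn - Module.finrank ℝ (dirL 𝒜)) := by
  rw [nu_eq v hv]
  set d := Module.finrank ℝ (dirL 𝒜) with hd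
  have h1 : ∀ H ∈ Finset.univ.filter (fun H : Face 𝒜 => fle H.sgn C.sgn),
      (-1 : ℝ) ^ dm H.sgn * (1 : ℝ) ^ (dm H.sgn - d) * gam {z : V n | KK H.sgn C.sgn z} =
      (-1 : ℝ) ^ d * gam {z : V n | KK H.sgn C.sgn z} := by
    intro H hH
    have hHC := (Finset.mem_filter.1 hH).2
    by_cases hdm : dm H.sgn = d
    · rw [hdm]; simp
    · have : gam {z : V n | KK H.sgn C.sgn z} = gam (∅ : Set (V n)) := by
        apply gam_congr
        filter_upwards [ae_gen 𝒜] with z hz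
        refine ⟨fun h => ?_, fun h => h.elim⟩
        have h1 : RecOK H.sgn z := h.1
        have hr : Rec C.sgn (pr H.sgn z) := by
          intro ℓ
          by_cases hℓ : dir H.sgn ≤ LinearMap.ker ℓ.1.linear
          · exact Or.inl (hℓ (pr_mem _ _))
          · have := h1 ℓ hℓ
            rcases hHC ℓ with h0 | h0
            · rw [h0] at this
              exact Or.inl (sign_eq_zero_iff.1 this)
            · rw [h0] at this
              exact Or.inr this
        have h2 := mem_dirL.1 (hC _ hr)
        apply hdm
        have : dir H.sgn = dirL 𝒜 := by
          apply le_antisymm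
          · intro x hx
            rw [mem_dirL]
            intro ℓ
            by_contra hc
            exact hz.one H.sgn ℓ (fun h => hc (h hx)) (h2 ℓ)
          · intro x hx
            rw [mem_dir]
            exact fun ℓ _ => mem_dirL.1 hx ℓ
        rw [dm, this]
      rw [this]
      simp [gam]
  rw [Finset.sum_congr rfl h1, ← Finset.mul_sum, gam_KK_total, mul_one]
  obtain ⟨k, hk⟩ := Nat.exists_eq_add_of_le (le_dm C.sgn)
  rw [hk, Nat.add_sub_cancel_left, pow_add, mul_comm, ← mul_assoc, ← mul_pow]
  simp [hd]

lemma rec_of_bdd {C : Face 𝒜} (h : EssBounded 𝒜 C) {w : V n} (hw : Rec C.sgn w) : w ∈ dirL 𝒜 := by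
  rw [mem_dirL]
  intro ℓ
  by_contra h0
  obtain ⟨M, hM⟩ := isBounded_iff_forall_norm_le.1 h
  have hev : ∀ᶠ r : ℝ in atTop, C.pt + r • w ∈ C.carrier := by
    filter_upwards [germ_top 𝒜 C.pt w] with r hr
    rw [Face.sg_eq]
    funext i
    by_cases h0 : i.1.linear w = 0
    · rw [(hr i).1 h0, C.sg_pt]
    · rw [(hr i).2 h0]; exact (hw i).resolve_left h0
  let φ : V n →L[ℝ] ℝ := LinearMap.toContinuousLinearMap ℓ.1.linear
  have hb : ∀ x ∈ C.carrier, |ℓ.1.linear x| ≤ ‖φ‖ * (M + 1) := by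
    intro x hx
    have h1 := hM _ ⟨x, hx, rfl⟩
    obtain ⟨m, hm, hm2⟩ := Submodule.Quotient.norm_mk_lt ((dirL 𝒜).mkQ x) (ε := 1) one_pos
    have h3 : ℓ.1.linear x = ℓ.1.linear m := by
      have : m - x ∈ dirL 𝒜 := (Submodule.Quotient.eq _).1 hm
      have := mem_dirL.1 this ℓ
      rw [map_sub] at this
      linarith
    rw [h3]
    have h4 : ‖φ m‖ ≤ ‖φ‖ * ‖m‖ := φ.le_opNorm m
    refine h4.trans (mul_le_mul_of_nonneg_left ?_ (norm_nonneg _))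
    linarith
  have ht : Tendsto (fun r : ℝ => |ℓ.1.linear (C.pt + r • w)|) atTop atTop := by
    have : Tendsto (fun r : ℝ => r * |ℓ.1.linear w| - |ℓ.1.linear C.pt|) atTop atTop :=
      tendsto_atTop_add_const_right _ _ (tendsto_id.atTop_mul_const (abs_pos.2 h0))
    refine tendsto_atTop_mono' _ ?_ this
    filter_upwards [eventually_ge_atTop 0] with r hr
    rw [map_add, map_smul, smul_eq_mul]
    have h5 := abs_sub_abs_le_abs_sub (r * ℓ.1.linear w) (-ℓ.1.linear C.pt)
    rw [abs_mul, abs_of_nonneg hr, abs_neg, sub_neg_eq_add, add_comm (r * _)] at h5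
    exact h5
  obtain ⟨r, h1, h2⟩ := (hev.and (ht.eventually_gt_atTop (‖φ‖ * (M + 1)))).exists
  exact absurd (hb _ h1) (not_le.2 h2)

lemma bdd_of_rec {C : Face 𝒜} (hC : ∀ w, Rec C.sgn w → w ∈ dirL 𝒜) : EssBounded 𝒜 C := by
  by_contra hn
  have hun : ∀ k : ℕ, ∃ x ∈ C.carrier, x ∈ (dirL 𝒜)ᗮ ∧ (k : ℝ) + 1 < ‖x‖ := by
    intro k
    by_contra hc
    push Not at hc
    apply hn
    refine isBounded_iff_forall_norm_le.2 ⟨(k : ℝ) + 1, ?_⟩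
    rintro _ ⟨x, hx, rfl⟩
    let p := (dirL 𝒜).starProjection x
    have hp : p ∈ dirL 𝒜 := Submodule.starProjection_apply_mem _ _
    have hy : x - p ∈ C.carrier := by
      rw [Face.sg_eq] at hx ⊢
      rw [← hx]
      funext ℓ
      show SignType.sign (ℓ.1 (x - p)) = SignType.sign (ℓ.1 x)
      have := aff_add ℓ.1 (x - p) p
      rw [sub_add_cancel, mem_dirL.1 hp ℓ, add_zero] at this
      rw [this]
    have h2 := hc _ hy (Submodule.sub_starProjection_mem_orthogonal x)
    have e : (dirL 𝒜).mkQ x = (dirL 𝒜).mkQ (x - p) := by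
      rw [map_sub, (Submodule.Quotient.mk_eq_zero _).2 hp |> fun h => (show (dirL 𝒜).mkQ p = 0 from h),
        sub_zero]
    rw [e]
    exact (Submodule.Quotient.norm_mk_le _ _).trans h2
  choose x hx1 hx2 hx3 using hun
  have hpos : ∀ k, 0 < ‖x k‖ := fun k => lt_trans (by positivity) (hx3 k)
  let u : ℕ → V n := fun k => ‖x k‖⁻¹ • x k
  have hu : ∀ k, u k ∈ Metric.sphere (0 : V n) 1 := by
    intro k
    rw [mem_sphere_zero_iff_norm, norm_smul, norm_inv, norm_norm, inv_mul_cancel₀ (hpos k).ne']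
  obtain ⟨a, ha, φ, hφ, hlim⟩ := (isCompact_sphere (0 : V n) 1).tendsto_subseq hu
  have hinv : Tendsto (fun k => ‖x k‖⁻¹) atTop (𝓝 0) := by
    apply tendsto_inv_atTop_zero.comp
    refine tendsto_atTop_mono (fun k => ?_) tendsto_natCast_atTop_atTop
    linarith [hx3 k]
  have haperp : a ∈ (dirL 𝒜)ᗮ := by
    refine (Submodule.isClosed_orthogonal _).mem_of_tendsto hlim (Eventually.of_forall fun k => ?_)
    exact Submodule.smul_mem _ _ (hx2 _)
  have hrec : Rec C.sgn a := by
    intro ℓ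
    have hl : Tendsto (fun k => ‖x (φ k)‖⁻¹ * ℓ.1 (x (φ k))) atTop (𝓝 (ℓ.1.linear a)) := by
      have h1 : Tendsto (fun k => ℓ.1.linear (u (φ k))) atTop (𝓝 (ℓ.1.linear a)) :=
        ((lin_cont ℓ.1).tendsto a).comp hlim
      have h2 : Tendsto (fun k => ‖x (φ k)‖⁻¹ * ℓ.1 0) atTop (𝓝 (0 * ℓ.1 0)) :=
        (hinv.comp hφ.tendsto_atTop).mul_const _
      have h3 := h1.add h2
      rw [zero_mul, add_zero] at h3
      refine h3.congr fun k => ?_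
      have := aff_add ℓ.1 0 (x (φ k))
      rw [zero_add] at this
      rw [this]
      simp only [u, map_smul, smul_eq_mul]
      ring
    have hs : ∀ k, SignType.sign (‖x (φ k)‖⁻¹ * ℓ.1 (x (φ k))) = C.sgn ℓ := by
      intro k
      rw [sign_mul, sign_pos (inv_pos.2 (hpos _)), one_mul]
      exact hx1 (φ k) ℓ
    rcases hCl : C.sgn ℓ with _ | _ | _
    · left
      have h0 : ∀ k, ‖x (φ k)‖⁻¹ * ℓ.1 (x (φ k)) = 0 := fun k => by
        have := hs k
        rw [hCl] at this
        exact sign_eq_zero_iff.1 this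
      simp only [h0] at hl
      exact (tendsto_nhds_unique hl tendsto_const_nhds)
    · have h0 : ∀ k, ‖x (φ k)‖⁻¹ * ℓ.1 (x (φ k)) ≤ 0 := fun k => by
        have := hs k
        rw [hCl] at this
        exact (sign_eq_neg_one_iff.1 this).le
      rcases eq_or_lt_of_le (le_of_tendsto' hl h0) with h | h
      · exact Or.inl h
      · exact Or.inr (sign_neg h)
    · have h0 : ∀ k, 0 ≤ ‖x (φ k)‖⁻¹ * ℓ.1 (x (φ k)) := fun k => by
        have := hs k
        rw [hCl] at this
        exact (sign_eq_one_iff.1 this).le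
      rcases eq_or_lt_of_le (ge_of_tendsto' hl h0) with h | h
      · exact Or.inl h.symm
      · exact Or.inr (sign_pos h)
  have h0 : inner ℝ a a = 0 := haperp a (hC a hrec)
  rw [inner_self_eq_zero] at h0
  rw [h0] at ha
  simp at ha

open Classical in
lemma nu_one (v : Face 𝒜 → ℕ → ℝ)
    (hv : ∀ F : Face 𝒜, HasIntrinsicVolumes (closure (Face.carrier 𝒜 F)) (v F)) (C : Face 𝒜) :
    intrinsicElt 𝒜 v 1 C = if EssBounded 𝒜 C then
      (-1 : ℝ) ^ (dm C.sgn - Module.finrank ℝ (dirL 𝒜)) else 0 := by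
  by_cases h : EssBounded 𝒜 C
  · rw [if_pos h]
    exact nu_one_bdd v hv C fun w hw => rec_of_bdd h hw
  · rw [if_neg h]
    have : ∃ w, Rec C.sgn w ∧ w ∉ dirL 𝒜 := by
      by_contra hc
      push Not at hc
      exact h (bdd_of_rec hc)
    obtain ⟨w, h1, h2⟩ := this
    rw [nu_one_chi v hv, chi_zero C h1 h2, mul_zero]

end UnitElt

open Classical in
/-- **Multiplicativity of intrinsic elements.** `ν_s · ν_t = ν_{st}`; moreover `ν_1`
is the unit element `υ = Σ_{F essentially bounded} (-1)^{rk F} H_F` and `ν_{-1}` is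
the Takeuchi element `τ = Σ_F (-1)^{rk F} H_F`. -/
theorem intrinsic_mul {n : ℕ} (𝒜 : Finset (AffForm n))
    (h𝒜 : ∀ ℓ ∈ 𝒜, ℓ.linear ≠ 0)
    (v : Face 𝒜 → ℕ → ℝ)
    (hv : ∀ F : Face 𝒜, HasIntrinsicVolumes (closure (Face.carrier 𝒜 F)) (v F)) :
    (∀ s t : ℝ, mulT 𝒜 (intrinsicElt 𝒜 v s) (intrinsicElt 𝒜 v t)
        = intrinsicElt 𝒜 v (s * t)) ∧
    intrinsicElt 𝒜 v 1 = (fun F => if EssBounded 𝒜 F then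
        (-1 : ℝ) ^ (dimS (Face.carrier 𝒜 F) - Module.finrank ℝ (dirL 𝒜)) else 0) ∧
    intrinsicElt 𝒜 v (-1) = (fun F =>
        (-1 : ℝ) ^ (dimS (Face.carrier 𝒜 F) - Module.finrank ℝ (dirL 𝒜))) := by
  refine ⟨fun s t => nu_mul v hv s t, ?_, ?_⟩
  · funext F
    rw [nu_one v hv F, dimS_carrier]
  · funext F
    rw [nu_neg_one v hv F, dimS_carrier]

end CharElts
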